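/- arXiv:1511.00478 — 2 statements merged into one kernel-verified Lean document; each statement's English description precedes it below -/
import Mathlib

section
/- Let n be a positive integer. Then t(1,1,1,12;n) = N(1,1,1,12; 8n+15), i.e., every representation 8n+15 = x² + y² + z² + 12w² with x,y,z,w ∈ ℤ has x, y, z, w all odd, so the count of all representations equals the count of representations with all variables odd, which equals t(1,1,1,12;n). -/
/-!
Modulo 8 a square is 1 if its root is odd, and 0 or 4 otherwise. As `8n + 15 ≡ 7 (mod 8)` and
`7` is not a sum of three squares modulo 8, in `8n + 15 = x² + y² + z² + 12w²` the variable `w`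
cannot be even; for odd `w` the sum `x² + y² + z²` is `3` modulo 8, which forces `x, y, z` to be
odd (`odd_of_rep`). Since `(2x - 1)² = 8 · x(x - 1)/2 + 1` and `1 + 1 + 1 + 12 = 15`, doubling every
coordinate and subtracting one carries the representations of `n` by triangular numbers onto the
all-odd representations of `8n + 15` by squares, that is, onto all of them.
-/

open scoped BigOperators

/-- `Nquad a b c d n` is the number of quadruples `(x,y,z,w) ∈ ℤ⁴` with
`n = a*x^2 + b*y^2 + c*z^2 + d*w^2`. -/
noncomputable def Nquad (a b c d : ℕ) (n : ℕ) : ℕ :=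
  Nat.card {p : ℤ × ℤ × ℤ × ℤ //
    (n : ℤ) = a * p.1 ^ 2 + b * p.2.1 ^ 2 + c * p.2.2.1 ^ 2 + d * p.2.2.2 ^ 2}

/-- `tquad a b c d n` is the number of quadruples `(x,y,z,w) ∈ ℤ⁴` with
`n = a*x(x-1)/2 + b*y(y-1)/2 + c*z(z-1)/2 + d*w(w-1)/2`. -/
noncomputable def tquad (a b c d : ℕ) (n : ℕ) : ℕ :=
  Nat.card {p : ℤ × ℤ × ℤ × ℤ //
    (n : ℤ) = a * (p.1 * (p.1 - 1) / 2) + b * (p.2.1 * (p.2.1 - 1) / 2)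
      + c * (p.2.2.1 * (p.2.2.1 - 1) / 2) + d * (p.2.2.2 * (p.2.2.2 - 1) / 2)}

/-- The square of an integer modulo 8 according to parity. -/
lemma sq_emod_eight (x : ℤ) :
    (Odd x ∧ x ^ 2 % 8 = 1) ∨ (¬ Odd x ∧ (x ^ 2 % 8 = 0 ∨ x ^ 2 % 8 = 4)) := by
  have h : x % 8 = 0 ∨ x % 8 = 1 ∨ x % 8 = 2 ∨ x % 8 = 3 ∨ x % 8 = 4 ∨ x % 8 = 5 ∨
      x % 8 = 6 ∨ x % 8 = 7 := by omega
  rw [Int.odd_iff]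
  rcases h with h | h | h | h | h | h | h | h <;> simp [pow_two, Int.mul_emod, h] <;> omega

lemma odd_of_rep (n x y z w : ℤ) (h : 8 * n + 15 = x ^ 2 + y ^ 2 + z ^ 2 + 12 * w ^ 2) :
    Odd x ∧ Odd y ∧ Odd z ∧ Odd w := by
  rcases sq_emod_eight x with ⟨hx, h1⟩ | ⟨hx, h1⟩ <;>
  rcases sq_emod_eight y with ⟨hy, h2⟩ | ⟨hy, h2⟩ <;>
  rcases sq_emod_eight z with ⟨hz, h3⟩ | ⟨hz, h3⟩ <;>
  rcases sq_emod_eight w with ⟨hw, h4⟩ | ⟨hw, h4⟩ <;>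
  first
  | exact ⟨hx, hy, hz, hw⟩
  | (exfalso; omega)

lemma sq_two_mul_sub_one (x : ℤ) : (2 * x - 1) ^ 2 = 8 * (x * (x - 1) / 2) + 1 := by
  have h : x * (x - 1) / 2 * 2 = x * (x - 1) :=
    Int.ediv_mul_cancel (Int.even_mul_pred_self x).two_dvd
  linear_combination -4 * h

theorem stmt_17 (n : ℕ) (hn : 0 < n) :
    tquad 1 1 1 12 n = Nquad 1 1 1 12 (8 * n + 15) ∧
      ∀ x y z w : ℤ, (8 * (n : ℤ) + 15) = x ^ 2 + y ^ 2 + z ^ 2 + 12 * w ^ 2 →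
        Odd x ∧ Odd y ∧ Odd z ∧ Odd w := by
  refine ⟨?_, fun x y z w h => odd_of_rep n x y z w h⟩
  unfold tquad Nquad
  refine Nat.card_congr (Equiv.ofBijective (fun p =>
    ⟨(2 * p.1.1 - 1, 2 * p.1.2.1 - 1, 2 * p.1.2.2.1 - 1, 2 * p.1.2.2.2 - 1), ?_⟩) ⟨?_, ?_⟩)
  · have h := p.2
    simp only [sq_two_mul_sub_one]
    push_cast at h ⊢
    linarith
  · rintro ⟨⟨x, y, z, w⟩, _⟩ ⟨⟨x', y', z', w'⟩, _⟩ h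
    simp only [Subtype.mk.injEq, Prod.mk.injEq] at h ⊢
    omega
  · rintro ⟨⟨x, y, z, w⟩, h⟩
    push_cast at h
    obtain ⟨⟨a, rfl⟩, ⟨b, rfl⟩, ⟨c, rfl⟩, ⟨d, rfl⟩⟩ :=
      odd_of_rep n x y z w (by linarith)
    refine ⟨⟨(a + 1, b + 1, c + 1, d + 1), ?_⟩, ?_⟩
    · have e (k : ℤ) : 2 * k + 1 = 2 * (k + 1) - 1 := by ring
      simp only [e, sq_two_mul_sub_one] at h
      push_cast
      linarith
    · simp only [Subtype.mk.injEq, Prod.mk.injEq]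
      omega
end

section
/- Let n be a positive integer and write 8n+17 = 3^β·n₁ with n₁ a positive integer not divisible by 3. Then t(1,1,3,12;n) = σ(n₁) − a(8n+17). -/
/-!
Everything is expressed through the theta functions `φ(q) = ∑ q^{n²}` (`ph`) and
`ψ(q) = ∑ q^{n(n+1)/2}` (`ps`). Write `T(q) = φ(q)φ(q³)`, `P(q) = ψ(q)ψ(q³)` and
`A(q) = T(q) + 4qP(q²)` (`tt`, `PP`, `AA`), and let `s(n)` be the sum of the divisors of `n` prime
to 3, so that `s(8n+17) = σ(n₁)`.

*The coefficients `a(n)`.* Euler's pentagonal number theorem and a rearrangement of a double series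
turn `∏ (1 - qᵏ)(1 - q²ᵏ)` into `φ(-q)ψ(q)` (`prod_eq_ph_mul_ps`), whence
`∑ a(n) qⁿ = q P(q²) T(-q²)` (`genFun_a`).

*The divisor sums.* With `χ` the nontrivial character modulo 3 and `c(n) = ∑_{d ∣ n} χ(d)`, an
elementary argument of Liouville type evaluates `∑ c(i)c(n-i)` (`three_mul_sum_chi_quads`); in terms
of `L = 1 + 6 ∑ c(n) qⁿ` it says `L² = 1 + 12 ∑ s(n) qⁿ` (`thL_sq`). Moreover
`T(q) = (L(q) + 2L(q⁴))/3` (`tt_eq_lamT`), because both sides have the form `1 + 2q + ⋯` and satisfy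
`F(q) + F(-q) = 4F(q⁴) - 2F(-q⁴)` and `F(q)F(-q) = F(-q²)²`, and these conditions determine all
coefficients (`coeff_unique`). Computing `T(q)² - T(-q)²` in both descriptions gives
`∑_{m odd} s(m) qᵐ = q A(q⁴) P(q²)` (`lamS_sub_neg`).

*Extraction.* Hence `∑_{m odd} (s(m) - a(m)) qᵐ = q P(q²) (A(q⁴) - T(-q²))`. The 2-dissections of
the theta functions allow one to pick out every eighth coefficient (`extraction`), and identities
among theta functions, notably the modular equation of degree 3 (`cubic_modular_eq`, `theta_algebra`),
simplify the result to `∑ (s(8k+1) - a(8k+1)) qᵏ = 16q² ψ(q)²ψ(q³)ψ(q¹²)` (`G2_eq`). The right-hand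
side is `q²` times the generating function of `t(1,1,3,12;n)` (`genFun_tquad`).
-/

open scoped BigOperators

open Filter Topology

/-! ### Theta functions -/

/-- Ramanujan's theta function `φ(q) = ∑ q^{n²}`, `n ∈ ℤ`. -/
noncomputable def ph (q : ℂ) : ℂ := ∑' n : ℤ, q ^ (n ^ 2)

/-- Ramanujan's theta function `ψ(q) = ∑_{n ≥ 0} q^{n(n+1)/2}`, written as a sum over `n ∈ ℤ`:
the exponents `n(2n+1)` run through every triangular number exactly once. -/
noncomputable def ps (q : ℂ) : ℂ := ∑' n : ℤ, q ^ (n * (2 * n + 1))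

theorem summable_pow_natAbs {r : ℝ} (h0 : 0 ≤ r) (h1 : r < 1) :
    Summable fun n : ℤ => r ^ n.natAbs := by
  rw [summable_int_iff_summable_nat_and_neg]
  constructor <;> simpa using summable_geometric_of_lt_one h0 h1

theorem summable_pow_of_le {q : ℂ} (hq : ‖q‖ < 1) (e : ℤ → ℕ) (he : ∀ n, n.natAbs ≤ e n) :
    Summable fun n : ℤ => q ^ e n := by
  refine Summable.of_norm_bounded (summable_pow_natAbs (norm_nonneg q) hq) fun n => ?_
  rw [norm_pow]
  exact pow_le_pow_of_le_one (norm_nonneg q) hq.le (he n)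

theorem int_abs_le_sq (n : ℤ) : |n| ≤ n ^ 2 := by
  rcases abs_cases n with ⟨h, h'⟩ | ⟨h, h'⟩ <;> rw [h]
  · rcases h'.eq_or_lt with h | h
    · simp [← h]
    · nlinarith
  · nlinarith

theorem int_abs_le_tri (n : ℤ) : |n| ≤ n * (2 * n + 1) := by
  rcases abs_cases n with ⟨h, h'⟩ | ⟨h, h'⟩ <;> rw [h] <;> nlinarith

theorem summable_zpow_of_le_add_one {q : ℂ} (hq : ‖q‖ < 1) (e : ℤ → ℤ) (he : ∀ n, |n| ≤ e n + 1)
    (h0 : ∀ n, 0 ≤ e n) : Summable fun n : ℤ => q ^ e n := by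
  -- the radius is enlarged slightly so that one can divide by it
  set r : ℝ := (‖q‖ + 1) / 2 with hr
  have hr0 : 0 < r := by have := norm_nonneg q; linarith
  have hr1 : r < 1 := by linarith
  have hqr : ‖q‖ ≤ r := by linarith
  refine Summable.of_norm_bounded ((summable_pow_natAbs hr0.le hr1).mul_left r⁻¹) fun n => ?_
  obtain ⟨m, hm⟩ := Int.eq_ofNat_of_zero_le (h0 n)
  have hn := he n
  rw [Int.abs_eq_natAbs, hm] at hn
  rw [hm, zpow_natCast, norm_pow, le_inv_mul_iff₀ hr0]
  calc r * ‖q‖ ^ m ≤ r * r ^ m := by gcongr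
    _ = r ^ (m + 1) := (pow_succ' r m).symm
    _ ≤ r ^ n.natAbs := pow_le_pow_of_le_one hr0.le hr1.le (by omega)

theorem summable_zpow_of_le {q : ℂ} (hq : ‖q‖ < 1) (e : ℤ → ℤ) (he : ∀ n, |n| ≤ e n) :
    Summable fun n : ℤ => q ^ e n := by
  have h := summable_pow_of_le hq (fun n => (e n).toNat) fun n => by
    have := he n
    rw [Int.abs_eq_natAbs] at this
    omega
  refine h.congr fun n => ?_
  have h0 : 0 ≤ e n := (abs_nonneg n).trans (he n)
  rw [← zpow_natCast, Int.toNat_of_nonneg h0]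

theorem summable_ph {q : ℂ} (hq : ‖q‖ < 1) : Summable fun n : ℤ => q ^ (n ^ 2) :=
  summable_zpow_of_le hq _ int_abs_le_sq

theorem summable_ps {q : ℂ} (hq : ‖q‖ < 1) : Summable fun n : ℤ => q ^ (n * (2 * n + 1)) :=
  summable_zpow_of_le hq _ int_abs_le_tri

theorem tsum_even_odd {f : ℤ → ℂ} (hf : Summable f) :
    ∑' n, f n = ∑' n, f (2 * n) + ∑' n, f (2 * n + 1) := by
  have h2 : Function.Injective fun n : ℤ => 2 * n := fun a b h => by simpa using h
  have h3 : Function.Injective fun n : ℤ => 2 * n + 1 := fun a b h => by simpa using h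
  have e := (h2.hasSum_range_iff (f := f)).2 (hf.comp_injective h2).hasSum
  have o := (h3.hasSum_range_iff (f := f)).2 (hf.comp_injective h3).hasSum
  have hc : IsCompl (Set.range fun n : ℤ => 2 * n) (Set.range fun n : ℤ => 2 * n + 1) := by
    have := Int.isCompl_even_odd
    have h4 : (Set.range fun n : ℤ => 2 * n) = {n | Even n} := by
      ext x; exact ⟨fun ⟨y, hy⟩ => ⟨y, by rw [← hy]; ring⟩, fun ⟨y, hy⟩ => ⟨y, by simp only; omega⟩⟩
    have h5 : (Set.range fun n : ℤ => 2 * n + 1) = {n | Odd n} := by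
      ext x; exact ⟨fun ⟨y, hy⟩ => ⟨y, hy.symm⟩, fun ⟨y, hy⟩ => ⟨y, hy.symm⟩⟩
    rwa [h4, h5]
  exact (e.add_isCompl hc o).tsum_eq

/-- The sum over a product of two copies of `ℤ`, organised by the difference `j` of the two
variables. -/
theorem mul_diag {f g : ℤ → ℂ} (hf : Summable f) (hg : Summable g) :
    Summable (fun p : ℤ × ℤ => f (p.2 + p.1) * g p.2) ∧
    (∑' x, f x) * ∑' y, g y = ∑' j, ∑' y, f (y + j) * g y := by
  let E : ℤ × ℤ ≃ ℤ × ℤ :=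
    ⟨fun p => (p.2 + p.1, p.2), fun p => (p.1 - p.2, p.2), fun p => by ext <;> simp,
      fun p => by ext <;> simp⟩
  have hs : Summable fun p : ℤ × ℤ => f p.1 * g p.2 :=
    summable_mul_of_summable_norm hf.norm hg.norm
  have hs' : Summable fun p : ℤ × ℤ => f (p.2 + p.1) * g p.2 := (E.summable_iff).2 hs
  refine ⟨hs', ?_⟩
  rw [tsum_mul_tsum_of_summable_norm hf.norm hg.norm, ← E.tsum_eq]
  exact hs'.tsum_prod

/-- A product of two bilateral series, split by the parity of the difference of the two indices. -/
theorem mul_shear {f g : ℤ → ℂ} (hf : Summable f) (hg : Summable g) :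
    (∑' x, f x) * ∑' y, g y =
      ∑' i, ∑' y, f (y + 2 * i) * g y + ∑' i, ∑' y, f (y + (2 * i + 1)) * g y := by
  obtain ⟨hs, h⟩ := mul_diag hf hg
  rw [h]
  exact tsum_even_odd hs.prod

/-- The splitting of `mul_shear` after rotating the index lattice: pairs of equal parity are written
`(m + i, m - i)`, the other ones `(m + i + 1, m - i)`. -/
theorem mul_rot {f g : ℤ → ℂ} (hf : Summable f) (hg : Summable g) :
    (∑' x, f x) * ∑' y, g y =
      ∑' i, ∑' m, f (m + i) * g (m - i) + ∑' i, ∑' m, f (m + i + 1) * g (m - i) := by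
  rw [mul_shear hf hg]
  congr 1 <;> refine tsum_congr fun i => ?_
  · rw [← (Equiv.subRight i).tsum_eq]
    refine tsum_congr fun m => ?_
    simp only [Equiv.subRight_apply]; ring_nf
  · rw [← (Equiv.subRight i).tsum_eq]
    refine tsum_congr fun m => ?_
    simp only [Equiv.subRight_apply]; ring_nf

theorem tsum_sep {F : ℤ → ℤ → ℂ} (A B : ℤ → ℂ) (h : ∀ i m, F i m = A i * B m) :
    ∑' i, ∑' m, F i m = (∑' i, A i) * ∑' m, B m := by
  simp only [h, tsum_mul_left, tsum_mul_right]

theorem tsum_refl (f : ℤ → ℂ) (c : ℤ) : ∑' n, f (c - n) = ∑' n, f n :=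
  (Equiv.subLeft c).tsum_eq f

theorem tsum_shift (f : ℤ → ℂ) (c : ℤ) : ∑' n, f (n + c) = ∑' n, f n :=
  (Equiv.addRight c).tsum_eq f

theorem npow_zpow (q : ℂ) (k : ℕ) (n : ℤ) : (q ^ k) ^ n = q ^ ((k : ℤ) * n) := by
  rw [zpow_mul, zpow_natCast]

/-- For each integer `c`, the exponents `(2y+c)(2y+c+1)` are twice the triangular numbers, each
taken once. -/
theorem tsum_pronic {q : ℂ} (c : ℤ) :
    ∑' y : ℤ, q ^ ((2 * y + c) * (2 * y + c + 1)) = ps (q ^ 2) := by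
  unfold ps
  obtain ⟨d, rfl | rfl⟩ := Int.even_or_odd' c
  · rw [← tsum_shift (fun n : ℤ => (q ^ 2) ^ (n * (2 * n + 1))) d]
    refine tsum_congr fun y => ?_
    rw [npow_zpow]; congr 1; push_cast; ring
  · rw [← tsum_refl (fun n : ℤ => (q ^ 2) ^ (n * (2 * n + 1))) (-1 - d)]
    refine tsum_congr fun y => ?_
    rw [npow_zpow]; congr 1; push_cast; ring

/-- Over all `m ∈ ℤ`, the exponent `m(m+1)` takes each of its values twice. -/
theorem tsum_pronic_all {q : ℂ} (hq : ‖q‖ < 1) :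
    Summable (fun m : ℤ => q ^ (m * (m + 1))) ∧ ∑' m : ℤ, q ^ (m * (m + 1)) = 2 * ps (q ^ 2) := by
  have hs : Summable (fun m : ℤ => q ^ (m * (m + 1))) := by
    refine summable_zpow_of_le_add_one hq _ (fun m => ?_) (fun m => ?_)
    · rcases abs_cases m with ⟨h, h'⟩ | ⟨h, h'⟩ <;> rw [h] <;> nlinarith
    · rcases lt_or_ge m 0 with h | h <;> nlinarith
  refine ⟨hs, ?_⟩
  rw [tsum_even_odd hs]
  have h0 := tsum_pronic (q := q) 0
  have h1 := tsum_pronic (q := q) 1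
  simp only [add_zero] at h0
  rw [h0, h1]; ring

theorem q_mul_zpow {q : ℂ} (hq : q ≠ 0) (n : ℤ) : q * q ^ n = q ^ (1 + n) := by
  rw [zpow_add₀ hq, zpow_one]

theorem pow_lt_one_norm {q : ℂ} (hq : ‖q‖ < 1) {k : ℕ} (hk : k ≠ 0) : ‖q ^ k‖ < 1 := by
  rw [norm_pow]; exact pow_lt_one₀ (norm_nonneg q) hq hk

/-- The 2-dissection `φ(q) = φ(q⁴) + 2qψ(q⁸)`, by splitting squares according to parity. -/
theorem ph_dissect {q : ℂ} (h0 : q ≠ 0) (hq : ‖q‖ < 1) :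
    ph q = ph (q ^ 4) + 2 * q * ps (q ^ 8) := by
  have h4 := pow_lt_one_norm hq (k := 4) (by norm_num)
  have e8 : q ^ 8 = (q ^ 4) ^ 2 := by ring
  rw [e8, mul_comm 2 q, mul_assoc, ← (tsum_pronic_all h4).2]
  unfold ph
  rw [tsum_even_odd (summable_ph hq), ← tsum_mul_left]
  congr 1 <;> refine tsum_congr fun n => ?_
  · rw [npow_zpow]; congr 1; push_cast; ring
  · rw [npow_zpow, q_mul_zpow h0]; congr 1; push_cast; ring

/-- `ψ(q)² = φ(q)ψ(q²)`. -/
theorem ps_sq {q : ℂ} (h0 : q ≠ 0) (hq : ‖q‖ < 1) : ps q ^ 2 = ph q * ps (q ^ 2) := by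
  have h4 := pow_lt_one_norm hq (k := 4) (by norm_num)
  have e8 : q ^ 8 = (q ^ 4) ^ 2 := by ring
  rw [ph_dissect h0 hq, e8, mul_comm 2 q, mul_assoc q, ← (tsum_pronic_all h4).2, sq]
  conv_lhs => unfold ps
  rw [mul_rot (summable_ps hq) (summable_ps hq), add_mul]
  congr 1
  · rw [tsum_sep (fun i => (q ^ 4) ^ (i ^ 2)) (fun m => (q ^ 2) ^ (m * (2 * m + 1)))]
    · rfl
    intro i m
    rw [npow_zpow, npow_zpow, ← zpow_add₀ h0, ← zpow_add₀ h0]; congr 1; push_cast; ring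
  · rw [tsum_sep (fun i => q * (q ^ 4) ^ (i * (i + 1)))
      (fun m => (q ^ 2) ^ ((-1 - m) * (2 * (-1 - m) + 1))), tsum_mul_left,
      tsum_refl (fun m => (q ^ 2) ^ (m * (2 * m + 1)))]
    · rfl
    intro i m
    rw [npow_zpow, npow_zpow, q_mul_zpow h0, ← zpow_add₀ h0, ← zpow_add₀ h0]
    congr 1; push_cast; ring

/-- The 2-dissection of the theta series of `x² + y²`. -/
theorem ph_sq {q : ℂ} (h0 : q ≠ 0) (hq : ‖q‖ < 1) :
    ph q ^ 2 = ph (q ^ 2) ^ 2 + 4 * q * ps (q ^ 4) ^ 2 := by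
  have h2 := pow_lt_one_norm hq (k := 2) (by norm_num)
  have e4 : q ^ 4 = (q ^ 2) ^ 2 := by ring
  have e : 4 * q * ps (q ^ 4) ^ 2 = (q * (2 * ps (q ^ 4))) * (2 * ps (q ^ 4)) := by ring
  rw [e, e4, ← (tsum_pronic_all h2).2, sq, sq]
  conv_lhs => unfold ph
  rw [mul_rot (summable_ph hq) (summable_ph hq)]
  congr 1
  · rw [tsum_sep (fun i => (q ^ 2) ^ (i ^ 2)) (fun m => (q ^ 2) ^ (m ^ 2))]
    · rfl
    intro i m
    rw [npow_zpow, npow_zpow, ← zpow_add₀ h0, ← zpow_add₀ h0]; congr 1; push_cast; ring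
  · rw [tsum_sep (fun i => q * (q ^ 2) ^ (i * (i + 1))) (fun m => (q ^ 2) ^ (m * (m + 1))),
      tsum_mul_left]
    intro i m
    rw [npow_zpow, npow_zpow, q_mul_zpow h0, ← zpow_add₀ h0, ← zpow_add₀ h0]
    congr 1; push_cast; ring

/-- The 2-dissection of `ψ(q)ψ(q³)`, on which the extraction of coefficients and the modular
equation of degree 3 both rest. -/
theorem ps_mul_ps_cube {q : ℂ} (h0 : q ≠ 0) (hq : ‖q‖ < 1) :
    ps q * ps (q ^ 3) = ph (q ^ 6) * ps (q ^ 4) + q * ph (q ^ 2) * ps (q ^ 12) := by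
  have h3 := pow_lt_one_norm hq (k := 3) (by norm_num)
  have h2 := pow_lt_one_norm hq (k := 2) (by norm_num)
  conv_lhs => unfold ps
  rw [mul_shear (summable_ps hq) (summable_ps h3)]
  congr 1
  · have e4 : q ^ 4 = (q ^ 2) ^ 2 := by ring
    have : ∀ i : ℤ, ∑' y : ℤ, q ^ ((y + 2 * i) * (2 * (y + 2 * i) + 1)) *
        (q ^ 3) ^ (y * (2 * y + 1)) = (q ^ 6) ^ (i ^ 2) * ps (q ^ 4) := by
      intro i
      rw [e4, ← tsum_pronic i, ← tsum_mul_left]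
      refine tsum_congr fun y => ?_
      simp only [npow_zpow]
      rw [← zpow_add₀ h0, ← zpow_add₀ h0]; congr 1; push_cast; ring
    simp only [this, tsum_mul_right]
    rfl
  · -- the exponent of the second sum is `1 + 6i(i+1) + 2(2y+i+1)²`; the parity of `i` decides
    -- which residue class modulo 2 the number `2y+i+1` runs through
    have key : ∀ i y : ℤ, q ^ ((y + (2 * i + 1)) * (2 * (y + (2 * i + 1)) + 1)) *
        (q ^ 3) ^ (y * (2 * y + 1)) =
          q * (q ^ 6) ^ (i * (i + 1)) * (q ^ 2) ^ ((2 * y + i + 1) ^ 2) := by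
      intro i y
      simp only [npow_zpow]
      rw [q_mul_zpow h0, ← zpow_add₀ h0, ← zpow_add₀ h0]; congr 1; push_cast; ring
    simp only [key, tsum_mul_left]
    have h6 := pow_lt_one_norm hq (k := 6) (by norm_num)
    have e12 : q ^ 12 = (q ^ 6) ^ 2 := by ring
    set e : ℤ → ℂ := fun c => ∑' y : ℤ, (q ^ 2) ^ ((2 * y + c) ^ 2) with he
    have hev : ∀ d : ℤ, e (2 * d) = e 0 := by
      intro d
      simp only [he]
      rw [← tsum_shift (fun y : ℤ => (q ^ 2) ^ ((2 * y + 0) ^ 2)) d]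
      refine tsum_congr fun y => ?_
      congr 1; ring
    have hod : ∀ d : ℤ, e (2 * d + 1) = e 1 := by
      intro d
      simp only [he]
      rw [← tsum_shift (fun y : ℤ => (q ^ 2) ^ ((2 * y + 1) ^ 2)) d]
      refine tsum_congr fun y => ?_
      congr 1; ring
    have hsum : e 0 + e 1 = ph (q ^ 2) := by
      unfold ph
      rw [tsum_even_odd (summable_ph h2)]
      simp only [he, add_zero]
    have hper : ∀ i : ℤ, ∑' y : ℤ, (q ^ 2) ^ ((2 * y + i + 1) ^ 2) = e (i + 1) := by
      intro i; simp only [he, add_assoc]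
    simp only [hper]
    have hb : ∀ i, e (i + 1) = e 0 ∨ e (i + 1) = e 1 := by
      intro i
      obtain ⟨d, hd | hd⟩ := Int.even_or_odd' (i + 1) <;> rw [hd]
      · exact Or.inl (hev d)
      · exact Or.inr (hod d)
    have hs : Summable fun i : ℤ => q * (q ^ 6) ^ (i * (i + 1)) * e (i + 1) := by
      have := ((tsum_pronic_all h6).1.mul_left q).norm.mul_right (max ‖e 0‖ ‖e 1‖)
      refine Summable.of_norm_bounded this fun i => ?_
      rw [norm_mul]
      gcongr
      rcases hb i with h | h <;> rw [h] <;> simp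
    rw [tsum_even_odd hs, e12, ← tsum_pronic 0]
    have a1 : ∀ i : ℤ, q * (q ^ 6) ^ (2 * i * (2 * i + 1)) * e (2 * i + 1) =
        (q * e 1) * (q ^ 6) ^ ((2 * i + 0) * (2 * i + 0 + 1)) := by
      intro i; rw [hod, add_zero]; ring
    have a2 : ∀ i : ℤ, q * (q ^ 6) ^ ((2 * i + 1) * (2 * i + 1 + 1)) * e (2 * i + 1 + 1) =
        (q * e 0) * (q ^ 6) ^ ((2 * i + 1) * (2 * i + 1 + 1)) := by
      intro i; rw [show 2 * i + 1 + 1 = 2 * (i + 1) by ring, hev]; ring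
    simp only [a1, a2, tsum_mul_left]
    rw [tsum_pronic 0, tsum_pronic 1, ← hsum]; ring

/-- In the double series for `φ(q)φ(-q)` the terms with `x + y` odd cancel in pairs, since
exchanging `x²` and `y²` changes the sign; the terms with `x + y` even make up `φ(-q²)²`. -/
theorem ph_mul_ph_neg {q : ℂ} (h0 : q ≠ 0) (hq : ‖q‖ < 1) :
    ph q * ph (-q) = ph (-q ^ 2) ^ 2 := by
  have hq' : ‖-q‖ < 1 := by rwa [norm_neg]
  have hm : (-1 : ℂ) ≠ 0 := by norm_num
  have hn : ∀ a : ℤ, (-q) ^ a = (-1) ^ a * q ^ a := fun a => by rw [← mul_zpow, neg_one_mul]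
  have hn2 : ∀ a : ℤ, (-q ^ 2) ^ a = (-1) ^ a * q ^ (2 * a) := fun a => by
    rw [← neg_one_mul, mul_zpow, npow_zpow]; norm_cast
  have par : ∀ a b c : ℤ, a = b + 2 * c → (-1 : ℂ) ^ a = (-1) ^ b := by
    rintro a b c rfl
    rw [zpow_add₀ hm, zpow_mul]; norm_num
  conv_lhs => unfold ph
  rw [mul_rot (summable_ph hq) (summable_ph hq'), sq]
  have : ∑' i : ℤ, ∑' m : ℤ, q ^ ((m + i + 1) ^ 2) * (-q) ^ ((m - i) ^ 2) = 0 := by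
    have hz : ∀ i : ℤ, ∑' m : ℤ, q ^ ((m + i + 1) ^ 2) * (-q) ^ ((m - i) ^ 2) = 0 := by
      intro i
      have h := tsum_refl (fun m : ℤ => q ^ ((m + i + 1) ^ 2) * (-q) ^ ((m - i) ^ 2)) (-1)
      have h' : ∀ m : ℤ, q ^ ((-1 - m + i + 1) ^ 2) * (-q) ^ ((-1 - m - i) ^ 2) =
          -(q ^ ((m + i + 1) ^ 2) * (-q) ^ ((m - i) ^ 2)) := by
        intro m
        rw [hn, hn, par ((-1 - m - i) ^ 2) ((m - i) ^ 2 + 1) (m + i + 2 * m * i),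
          zpow_add₀ hm, zpow_one, show (-1 - m + i + 1) ^ 2 = (m - i) ^ 2 by ring,
          show (-1 - m - i) ^ 2 = (m + i + 1) ^ 2 by ring]
        · ring
        · ring
      simp only [h', tsum_neg] at h
      exact self_eq_neg.mp h.symm
    simp only [hz, tsum_zero]
  rw [this, add_zero, tsum_sep (fun i => (-q ^ 2) ^ (i ^ 2)) (fun m => (-q ^ 2) ^ (m ^ 2))]
  · rfl
  intro i m
  rw [hn, hn2, hn2, par ((m - i) ^ 2) (m ^ 2 + i ^ 2) (- m * i) (by ring), zpow_add₀ hm]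
  have : q ^ ((m + i) ^ 2) * q ^ ((m - i) ^ 2) = q ^ (2 * i ^ 2) * q ^ (2 * m ^ 2) := by
    rw [← zpow_add₀ h0, ← zpow_add₀ h0]; congr 1; ring
  linear_combination ((-1) ^ (m ^ 2) * (-1) ^ (i ^ 2)) * this

/-! ### The Euler product in terms of theta functions -/

theorem summable_pentagonal {q : ℂ} (hq : ‖q‖ < 1) :
    Summable fun n : ℤ => (-1 : ℂ) ^ n * q ^ pentagonal n := by
  have h := summable_pow_of_le hq pentagonal fun n => by
    have := two_mul_natCast_pentagonal n
    zify
    rcases abs_cases n with ⟨h, h'⟩ | ⟨h, h'⟩ <;> rw [h] <;> nlinarith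
  refine h.norm.of_norm_bounded fun n => ?_
  rw [norm_mul, norm_zpow]; simp

/-- A bound on the partial products that is uniform in the starting index `k` and the length `m`. -/
theorem norm_prod_one_sub_pow_le {q : ℂ} (hq : ‖q‖ < 1) (k m : ℕ) :
    ‖∏ i ∈ Finset.range m, (1 - q ^ (k + i + 1))‖ ≤ Real.exp (1 - ‖q‖)⁻¹ := by
  rw [norm_prod]
  calc ∏ i ∈ Finset.range m, ‖1 - q ^ (k + i + 1)‖
      ≤ ∏ i ∈ Finset.range m, (1 + ‖q‖ ^ i) := by
        refine Finset.prod_le_prod (fun _ _ => norm_nonneg _) fun i _ => ?_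
        refine (norm_sub_le _ _).trans ?_
        rw [norm_one, norm_pow]
        gcongr 1 + ?_
        exact pow_le_pow_of_le_one (norm_nonneg q) hq.le (by omega)
    _ ≤ Real.exp (∑ i ∈ Finset.range m, ‖q‖ ^ i) :=
        Real.prod_one_add_le_exp_sum _ fun i => by positivity
    _ ≤ _ := by
        gcongr
        rw [← tsum_geometric_of_lt_one (norm_nonneg q) hq]
        exact (summable_geometric_of_lt_one (norm_nonneg q) hq).sum_le_tsum _
          fun _ _ => by positivity

/-- Euler's pentagonal number theorem for a complex number in the open unit disc. -/
theorem euler_pentagonal {q : ℂ} (hq : ‖q‖ < 1) :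
    ∏' n : ℕ, (1 - q ^ (n + 1)) = ∑' n : ℤ, (-1 : ℂ) ^ n * q ^ pentagonal n := by
  have hF := summable_pentagonal hq
  have hG := hF.comp_injective neg_injective
  have hm1 : (-1 : ℂ) ≠ 0 := by norm_num
  have hsplit : ∀ k : ℕ, (-1 : ℂ) ^ k * (q ^ pentagonal (-k) - q ^ pentagonal (k + 1)) =
      (-1 : ℂ) ^ (-(k : ℤ)) * q ^ pentagonal (-k) +
        (-1 : ℂ) ^ (-(-((k : ℤ) + 1))) * q ^ pentagonal (-(-((k : ℤ) + 1))) := by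
    intro k
    have e1 : (-1 : ℂ) ^ (-(k : ℤ)) = (-1) ^ k := by
      rw [zpow_neg, zpow_natCast, ← inv_pow]; norm_num
    rw [neg_neg, zpow_add₀ hm1, e1, zpow_natCast, zpow_one]; ring_nf
  have c1 : Function.Injective fun k : ℕ => (k : ℤ) := Nat.cast_injective
  have c2 : Function.Injective fun k : ℕ => -((k : ℤ) + 1) := fun a b h => by simpa using h
  have s1 := hG.comp_injective c1
  have s2 := hG.comp_injective c2
  set C := Real.exp (1 - ‖q‖)⁻¹ with hC
  have hbd : ∀ k n : ℕ, ‖q ^ ((k + 1) * n) * ∏ i ∈ Finset.range (n + 1), (1 - q ^ (k + i + 1))‖ ≤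
      ‖q‖ ^ n * C := by
    intro k n
    rw [norm_mul, norm_pow]
    exact mul_le_mul (pow_le_pow_of_le_one (norm_nonneg q) hq.le (by nlinarith))
      (norm_prod_one_sub_pow_le hq k (n + 1)) (norm_nonneg _) (by positivity)
  have hgeo := (summable_geometric_of_lt_one (norm_nonneg q) hq).mul_right C
  rw [Pentagonal.tprod_one_sub_pow]
  · simp only [hsplit]
    rw [← (Equiv.neg ℤ).tsum_eq]
    have := (HasSum.of_nat_of_neg_add_one s1.hasSum s2.hasSum).tsum_eq
    rw [← Summable.tsum_add s1 s2] at this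
    exact this.symm
  · exact tendsto_pow_atTop_nhds_zero_of_norm_lt_one hq
  · exact fun k => Summable.of_norm_bounded hgeo (hbd k)
  · intro k
    apply multipliable_one_add_of_summable (f := fun n => -q ^ (n + k + 1))
    have := (summable_nat_add_iff (k + 1)).mpr (summable_geometric_of_lt_one (norm_nonneg _) hq)
    simpa [add_assoc] using this
  · simp only [hsplit]
    exact s1.add s2
  · refine squeeze_zero_norm (a := fun k => ‖q‖ ^ k * ∑' n : ℕ, ‖q‖ ^ n * C) (fun k => ?_) ?_
    · rw [norm_mul, norm_mul, norm_pow, norm_pow, norm_neg, norm_one, one_pow, one_mul]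
      refine mul_le_mul ?_ ?_ (norm_nonneg _) (by positivity)
      · refine pow_le_pow_of_le_one (norm_nonneg q) hq.le ?_
        rw [Nat.le_div_iff_mul_le (by norm_num)]
        nlinarith
      · exact tsum_of_norm_bounded hgeo.hasSum (hbd k)
    · simpa using (tendsto_pow_atTop_nhds_zero_of_lt_one (norm_nonneg q) hq).mul_const
        (∑' n : ℕ, ‖q‖ ^ n * C)

theorem tsum_mod_three {H : ℤ → ℂ} (h : Summable H) :
    ∑' j, H j = ∑' n, H (3 * n - 1) + ∑' n, H (3 * n) + ∑' n, H (3 * n + 1) := by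
  have h' := ((Int.divModEquiv 3).symm.summable_iff).2 h
  have i0 : Function.Injective fun n : ℤ => 3 * n := fun a b h => by simpa using h
  have i1 : Function.Injective fun n : ℤ => 3 * n + 1 := fun a b h => by simpa using h
  have i2 : Function.Injective fun n : ℤ => 3 * n + 2 := fun a b h => by simpa using h
  rw [← (Int.divModEquiv 3).symm.tsum_eq, show ∑' c, H ((Int.divModEquiv 3).symm c) =
    ∑' c, ∑' d, H ((Int.divModEquiv 3).symm (c, d)) from h'.tsum_prod]
  have : ∀ c : ℤ, ∑' d : Fin 3, H ((Int.divModEquiv 3).symm (c, d)) =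
      H (3 * c) + (H (3 * c + 1) + H (3 * c + 2)) := by
    intro c
    rw [tsum_fintype, Fin.sum_univ_three, add_assoc]
    simp [Int.divModEquiv_symm_apply, mul_comm]
  simp only [this]
  have s0 : Summable fun n => H (3 * n) := h.comp_injective i0
  have s1 : Summable fun n => H (3 * n + 1) := h.comp_injective i1
  have s2 : Summable fun n => H (3 * n + 2) := h.comp_injective i2
  rw [s0.tsum_add (s1.add s2), s1.tsum_add s2,
    ← tsum_shift (fun n => H (3 * n - 1)) 1]
  have e : ∀ n : ℤ, 3 * (n + 1) - 1 = 3 * n + 2 := fun n => by ring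
  simp only [e]
  ring

/-- The sum `∑ (-1)^k q^{k² + w(w+1)/2}` over all pairs `(k, w)` is split according to `w - k`
modulo 3. Two classes each give the product of two pentagonal series, and in the third class
the terms cancel in pairs. -/
theorem prod_eq_ph_mul_ps {q : ℂ} (h0 : q ≠ 0) (hq : ‖q‖ < 1) :
    (∏' n : ℕ, (1 - q ^ (n + 1))) * ∏' n : ℕ, (1 - (q ^ 2) ^ (n + 1)) = ph (-q) * ps q := by
  have hm1 : (-1 : ℂ) ≠ 0 := by norm_num
  have par : ∀ a b c : ℤ, a = b + 2 * c → (-1 : ℂ) ^ a = (-1) ^ b := by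
    rintro a b c rfl
    rw [zpow_add₀ hm1, zpow_mul]; norm_num
  rw [euler_pentagonal hq, euler_pentagonal (pow_lt_one_norm hq two_ne_zero)]
  -- a square root of `q` turns the triangular exponents into pronic ones
  obtain ⟨r, rfl⟩ : ∃ r : ℂ, q = r ^ 2 := ⟨_, (Complex.cpow_nat_inv_pow q two_ne_zero).symm⟩
  have hr0 : r ≠ 0 := by rintro rfl; simp at h0
  have hr : ‖r‖ < 1 := by
    rw [norm_pow] at hq
    exact (pow_lt_one_iff_of_nonneg (norm_nonneg r) two_ne_zero).1 hq
  obtain ⟨hsf, hf⟩ := tsum_pronic_all hr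
  have hsg : Summable fun k : ℤ => (-1 : ℂ) ^ k * r ^ (2 * k ^ 2) := by
    refine (summable_ph hq).norm.of_norm_bounded fun k => ?_
    rw [norm_mul, norm_zpow, npow_zpow]; simp
  have hg : ∑' k : ℤ, (-1 : ℂ) ^ k * r ^ (2 * k ^ 2) = ph (-r ^ 2) := by
    refine tsum_congr fun k => ?_
    rw [← neg_one_mul (r ^ 2), mul_zpow, npow_zpow]
    congr 1
    obtain ⟨d, rfl | rfl⟩ := Int.even_or_odd' k
    · rw [par (2 * d) 0 d (by ring), par ((2 * d) ^ 2) 0 (2 * d ^ 2) (by ring)]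
    · rw [par (2 * d + 1) 1 d (by ring), par ((2 * d + 1) ^ 2) 1 (2 * d ^ 2 + 2 * d) (by ring)]
  obtain ⟨hs, hmul⟩ := mul_diag hsf hsg
  rw [tsum_mod_three hs.prod, hf, hg] at hmul
  have hA : ∑' n : ℤ, ∑' y : ℤ, r ^ ((y + (3 * n - 1)) * (y + (3 * n - 1) + 1)) *
      ((-1 : ℂ) ^ y * r ^ (2 * y ^ 2)) =
      (∑' n : ℤ, (-1 : ℂ) ^ n * (r ^ 2) ^ pentagonal n) *
        ∑' n : ℤ, (-1 : ℂ) ^ n * ((r ^ 2) ^ 2) ^ pentagonal n := by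
    rw [mul_comm, ← tsum_sep (F := fun n m => r ^ (((m - n) + (3 * n - 1)) *
      ((m - n) + (3 * n - 1) + 1)) * ((-1 : ℂ) ^ (m - n) * r ^ (2 * (m - n) ^ 2)))]
    · refine tsum_congr fun n => ?_
      exact ((Equiv.subRight n).tsum_eq fun y => r ^ ((y + (3 * n - 1)) * (y + (3 * n - 1) + 1)) *
        ((-1 : ℂ) ^ y * r ^ (2 * y ^ 2))).symm
    · intro n m
      have h1 := two_mul_natCast_pentagonal n
      have h2 := two_mul_natCast_pentagonal m
      rw [par (m - n) (n + m) (-n) (by ring), zpow_add₀ hm1, mul_left_comm, ← zpow_add₀ hr0,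
        ← pow_mul, ← pow_mul, ← pow_mul, ← zpow_natCast, ← zpow_natCast,
        show (m - n + (3 * n - 1)) * (m - n + (3 * n - 1) + 1) + 2 * (m - n) ^ 2 =
          ((2 * 2 * pentagonal n : ℕ) : ℤ) + ((2 * pentagonal m : ℕ) : ℤ) by
          push_cast; linear_combination (-2) * h1 - h2, zpow_add₀ hr0]
      ring_nf
  have hB : ∑' n : ℤ, ∑' y : ℤ, r ^ ((y + 3 * n) * (y + 3 * n + 1)) *
      ((-1 : ℂ) ^ y * r ^ (2 * y ^ 2)) =
      ∑' n : ℤ, ∑' y : ℤ, r ^ ((y + (3 * n - 1)) * (y + (3 * n - 1) + 1)) *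
      ((-1 : ℂ) ^ y * r ^ (2 * y ^ 2)) := by
    rw [← (Equiv.neg ℤ).tsum_eq]
    refine tsum_congr fun n => ?_
    rw [← (Equiv.neg ℤ).tsum_eq]
    refine tsum_congr fun y => ?_
    simp only [Equiv.neg_apply]
    rw [par (-y) y (-y) (by ring)]
    congr 2 <;> ring_nf
  have hC : ∑' n : ℤ, ∑' y : ℤ, r ^ ((y + (3 * n + 1)) * (y + (3 * n + 1) + 1)) *
      ((-1 : ℂ) ^ y * r ^ (2 * y ^ 2)) = 0 := by
    have : ∀ n : ℤ, ∑' y : ℤ, r ^ ((y + (3 * n + 1)) * (y + (3 * n + 1) + 1)) *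
      ((-1 : ℂ) ^ y * r ^ (2 * y ^ 2)) = 0 := by
      intro n
      have h := tsum_refl (fun y : ℤ => r ^ ((y + (3 * n + 1)) * (y + (3 * n + 1) + 1)) *
        ((-1 : ℂ) ^ y * r ^ (2 * y ^ 2))) (-(2 * n + 1))
      have h' : ∀ y : ℤ,
          r ^ ((-(2 * n + 1) - y + (3 * n + 1)) * (-(2 * n + 1) - y + (3 * n + 1) + 1)) *
            ((-1 : ℂ) ^ (-(2 * n + 1) - y) * r ^ (2 * (-(2 * n + 1) - y) ^ 2)) =
          -(r ^ ((y + (3 * n + 1)) * (y + (3 * n + 1) + 1)) *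
            ((-1 : ℂ) ^ y * r ^ (2 * y ^ 2))) := by
        intro y
        rw [par (-(2 * n + 1) - y) (y + 1) (-n - y - 1) (by ring), zpow_add₀ hm1, zpow_one,
          mul_left_comm, ← zpow_add₀ hr0, mul_left_comm, ← zpow_add₀ hr0,
          show (-(2 * n + 1) - y + (3 * n + 1)) * (-(2 * n + 1) - y + (3 * n + 1) + 1)
            + 2 * (-(2 * n + 1) - y) ^ 2 = (y + (3 * n + 1)) * (y + (3 * n + 1) + 1) + 2 * y ^ 2
            by ring]
        ring
      simp only [h', tsum_neg] at h
      exact self_eq_neg.mp h.symm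
    simp only [this, tsum_zero]
  rw [hA, hB, hA, hC] at hmul
  linear_combination -(1 / 2 : ℂ) * hmul

/-- The product `∏ (1 - q^{2k})(1 - q^{4k})(1 - q^{6k})(1 - q^{12k})` in terms of theta functions,
and its non-vanishing. -/
theorem eta_prod {q : ℂ} (h0 : q ≠ 0) (hq : ‖q‖ < 1) :
    ∏' k : ℕ, ((1 - q ^ (2 * (k + 1))) * (1 - q ^ (4 * (k + 1))) *
          (1 - q ^ (6 * (k + 1))) * (1 - q ^ (12 * (k + 1)))) =
      (ph (-q ^ 2) * ps (q ^ 2)) * (ph (-q ^ 6) * ps (q ^ 6)) ∧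
    (∏' k : ℕ, ((1 - q ^ (2 * (k + 1))) * (1 - q ^ (4 * (k + 1))) *
          (1 - q ^ (6 * (k + 1))) * (1 - q ^ (12 * (k + 1))))) ≠ 0 := by
  have hm : ∀ j : ℕ, j ≠ 0 → Multipliable fun k : ℕ => 1 - q ^ (j * (k + 1)) := fun j hj => by
    simpa only [← pow_mul] using ModularForm.multipliable_one_sub_pow (pow_lt_one_norm hq hj)
  have hz : ∀ j : ℕ, j ≠ 0 → ∏' k : ℕ, (1 - q ^ (j * (k + 1))) ≠ 0 := fun j hj => by
    simp only [sub_eq_add_neg]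
    refine tprod_one_add_ne_zero_of_summable (fun k => ?_) ?_
    · rw [← sub_eq_add_neg, sub_ne_zero]
      intro h
      have := pow_lt_one_norm hq (k := j * (k + 1)) (by positivity)
      rw [← h] at this; simp at this
    · have := (summable_nat_add_iff 1).mpr
        (summable_geometric_of_lt_one (norm_nonneg _) (pow_lt_one_norm hq hj))
      simpa [pow_mul] using this
  have h2 := hm 2 (by norm_num)
  have h4 := hm 4 (by norm_num)
  have h6 := hm 6 (by norm_num)
  have h12 := hm 12 (by norm_num)
  have key : ∏' k : ℕ, ((1 - q ^ (2 * (k + 1))) * (1 - q ^ (4 * (k + 1))) *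
          (1 - q ^ (6 * (k + 1))) * (1 - q ^ (12 * (k + 1)))) =
    (∏' k : ℕ, (1 - q ^ (2 * (k + 1)))) * (∏' k : ℕ, (1 - q ^ (4 * (k + 1)))) *
    (∏' k : ℕ, (1 - q ^ (6 * (k + 1)))) * (∏' k : ℕ, (1 - q ^ (12 * (k + 1)))) := by
    rw [((h2.mul h4).mul h6).tprod_mul h12, (h2.mul h4).tprod_mul h6, h2.tprod_mul h4]
  rw [key]
  refine ⟨?_, ?_⟩
  · rw [← prod_eq_ph_mul_ps (pow_ne_zero 2 h0) (pow_lt_one_norm hq (by norm_num)),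
      ← prod_eq_ph_mul_ps (pow_ne_zero 6 h0) (pow_lt_one_norm hq (by norm_num))]
    simp only [← pow_mul]
    norm_num [mul_assoc]
  · exact mul_ne_zero (mul_ne_zero (mul_ne_zero (hz 2 (by norm_num)) (hz 4 (by norm_num)))
      (hz 6 (by norm_num))) (hz 12 (by norm_num))

/-! ### Generating functions -/

/-- `GenFun a F` says that the power series with coefficients `a` converges to `F` on the open unit
disc. -/
def GenFun (a : ℕ → ℂ) (F : ℂ → ℂ) : Prop :=
  ∀ q : ℂ, ‖q‖ < 1 → HasSum (fun n => a n * q ^ n) (F q)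

theorem eventually_small (P : ℂ → Prop) (h : ∀ q, q ≠ 0 → ‖q‖ < 1 → P q) :
    ∀ᶠ q in 𝓝[≠] (0 : ℂ), P q := by
  have h1 : ∀ᶠ q in 𝓝[≠] (0 : ℂ), ‖q‖ < 1 := by
    refine eventually_nhdsWithin_of_eventually_nhds ?_
    have : Tendsto (fun q : ℂ => ‖q‖) (𝓝 0) (𝓝 0) := by
      simpa using (continuous_norm (E := ℂ)).tendsto 0
    exact this.eventually_lt_const one_pos
  filter_upwards [h1, self_mem_nhdsWithin] with q h2 h3 using h q h3 h2

namespace GenFun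

variable {a b : ℕ → ℂ} {F G : ℂ → ℂ}

theorem hasFPowerSeriesAt (h : GenFun a F) :
    HasFPowerSeriesAt F (FormalMultilinearSeries.ofScalars ℂ a) 0 := by
  rw [hasFPowerSeriesAt_iff]
  have : ∀ᶠ q in 𝓝 (0 : ℂ), ‖q‖ < 1 := by
    have : Tendsto (fun q : ℂ => ‖q‖) (𝓝 0) (𝓝 0) := by
      simpa using (continuous_norm (E := ℂ)).tendsto 0
    exact this.eventually_lt_const one_pos
  filter_upwards [this] with q hq
  simpa [FormalMultilinearSeries.coeff_ofScalars, mul_comm] using h q hq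

theorem continuousAt (h : GenFun a F) : ContinuousAt F 0 :=
  h.hasFPowerSeriesAt.analyticAt.continuousAt

theorem apply_zero (h : GenFun a F) : F 0 = a 0 := by
  refine (h 0 (by simp)).unique ?_
  convert hasSum_ite_eq (0 : ℕ) (a 0) using 2 with n
  rcases n with _ | n <;> simp

theorem tendsto (h : GenFun a F) : Tendsto F (𝓝[≠] 0) (𝓝 (a 0)) := by
  rw [← h.apply_zero]
  exact h.continuousAt.continuousWithinAt

/-- Two power series agreeing near the origin have the same coefficients. The origin itself is left
out, because integer powers of `q` have been manipulated only for `q ≠ 0`. -/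
theorem unique (h : GenFun a F) (h' : GenFun b G) (e : ∀ᶠ q in 𝓝[≠] (0 : ℂ), F q = G q) :
    a = b := by
  have h1 := h.hasFPowerSeriesAt
  have h2 := h'.hasFPowerSeriesAt
  have e' := (h1.analyticAt.frequently_eq_iff_eventually_eq h2.analyticAt).1 e.frequently
  have := h1.eq_formalMultilinearSeries_of_eventually h2 e'
  funext n
  have := congr_arg (fun p => p.coeff n) this
  simpa [FormalMultilinearSeries.coeff_ofScalars] using this

theorem add (h : GenFun a F) (h' : GenFun b G) : GenFun (fun n => a n + b n) (fun q => F q + G q) :=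
  fun q hq => by simpa only [add_mul] using (h q hq).add (h' q hq)

theorem smul (c : ℂ) (h : GenFun a F) : GenFun (fun n => c * a n) (fun q => c * F q) :=
  fun q hq => by simpa only [mul_assoc] using (h q hq).mul_left c

theorem comp_neg (h : GenFun a F) : GenFun (fun n => (-1) ^ n * a n) (fun q => F (-q)) :=
  fun q hq => by
    convert h (-q) (by rwa [norm_neg]) using 2 with n
    rw [neg_pow q]; ring

theorem comp_pow (h : GenFun a F) {k : ℕ} (hk : k ≠ 0) :
    GenFun (fun n => if k ∣ n then a (n / k) else 0) (fun q => F (q ^ k)) := fun q hq => by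
  have hi : Function.Injective fun n : ℕ => k * n := fun x y e => by simpa [hk] using e
  refine (hi.hasSum_iff ?_).1 ?_
  · intro n hn
    have : ¬ k ∣ n := fun ⟨m, hm⟩ => hn ⟨m, hm.symm⟩
    simp [this]
  · convert h (q ^ k) (pow_lt_one_norm hq hk) using 2 with n
    simp [hk, pow_mul]

theorem shift (h : GenFun a F) (k : ℕ) :
    GenFun (fun n => if k ≤ n then a (n - k) else 0) (fun q => q ^ k * F q) := fun q hq => by
  refine ((add_left_injective k).hasSum_iff ?_).1 ?_
  · intro n hn
    have : ¬ k ≤ n := fun hkn => hn ⟨n - k, by simp [hkn]⟩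
    simp [this]
  · refine ((h q hq).mul_left (q ^ k)).congr_fun fun n => ?_
    simp only [Function.comp_apply, Nat.le_add_left, if_true, Nat.add_sub_cancel, pow_add]
    ring

theorem mul (h : GenFun a F) (h' : GenFun b G) :
    GenFun (fun n => ∑ p ∈ Finset.HasAntidiagonal.antidiagonal n, a p.1 * b p.2)
      (fun q => F q * G q) :=
  fun q hq => by
    have s1 := (h q hq).summable.norm
    have s2 := (h' q hq).summable.norm
    have e := tsum_mul_tsum_eq_tsum_sum_antidiagonal_of_summable_norm s1 s2
    have s := (summable_norm_sum_mul_antidiagonal_of_summable_norm s1 s2).of_norm.hasSum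
    rw [← e, (h q hq).tsum_eq, (h' q hq).tsum_eq] at s
    refine s.congr_fun fun n => ?_
    rw [Finset.sum_mul]
    refine Finset.sum_congr rfl fun p hp => ?_
    rw [← Finset.HasAntidiagonal.mem_antidiagonal.1 hp, pow_add]; ring

/-- The part of a power series on even exponents. -/
theorem even (h : GenFun a F) : ∃ E : ℂ → ℂ, GenFun (fun n => a (2 * n)) E ∧
    ∀ q, ‖q‖ < 1 → F q + F (-q) = 2 * E (q ^ 2) := by
  have i : Function.Injective fun n : ℕ => 2 * n := fun x y e => by simpa using e
  have hs : ∀ q : ℂ, ‖q‖ < 1 → Summable fun n => a (2 * n) * (q ^ 2) ^ n := fun q hq => by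
    simpa [Function.comp_def, pow_mul] using (h q hq).summable.comp_injective i
  refine ⟨fun Q => ∑' n, a (2 * n) * Q ^ n, fun Q hQ => ?_, fun q hq => ?_⟩
  · obtain ⟨r, rfl⟩ : ∃ r : ℂ, Q = r ^ 2 := ⟨_, (Complex.cpow_nat_inv_pow Q two_ne_zero).symm⟩
    rw [norm_pow] at hQ
    exact (hs r ((pow_lt_one_iff_of_nonneg (norm_nonneg r) two_ne_zero).1 hQ)).hasSum
  · have e := (h.add h.comp_neg) q hq
    refine e.unique ?_
    refine (i.hasSum_iff ?_).1 ?_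
    · intro n hn
      have hn : Odd n := by
        rw [← Nat.not_even_iff_odd]
        rintro ⟨r, hr⟩
        exact hn ⟨r, by simp only; omega⟩
      simp [hn.neg_one_pow]
    · refine ((hs q hq).hasSum.mul_left 2).congr_fun fun n => ?_
      simp only [Function.comp_apply]
      rw [pow_mul q, pow_mul (-1 : ℂ)]; norm_num; ring

/-- The part of a power series on odd exponents. -/
theorem odd (h : GenFun a F) : ∃ E : ℂ → ℂ, GenFun (fun n => a (2 * n + 1)) E ∧
    ∀ q, ‖q‖ < 1 → F q - F (-q) = 2 * q * E (q ^ 2) := by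
  have i : Function.Injective fun n : ℕ => 2 * n + 1 := fun x y e => by simpa using e
  have hs : ∀ q : ℂ, ‖q‖ < 1 → Summable fun n => a (2 * n + 1) * (q ^ 2) ^ n := fun q hq => by
    rcases eq_or_ne q 0 with rfl | h0
    · refine summable_of_ne_finset_zero (s := {0}) fun n hn => ?_
      have : n ≠ 0 := by simpa using hn
      simp [this]
    · have := ((h q hq).summable.comp_injective i).mul_left q⁻¹
      refine this.congr fun n => ?_
      simp only [Function.comp_apply]
      field_simp; ring
  refine ⟨fun Q => ∑' n, a (2 * n + 1) * Q ^ n, fun Q hQ => ?_, fun q hq => ?_⟩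
  · obtain ⟨r, rfl⟩ : ∃ r : ℂ, Q = r ^ 2 := ⟨_, (Complex.cpow_nat_inv_pow Q two_ne_zero).symm⟩
    rw [norm_pow] at hQ
    exact (hs r ((pow_lt_one_iff_of_nonneg (norm_nonneg r) two_ne_zero).1 hQ)).hasSum
  · have e := (h.add (h.comp_neg.smul (-1))) q hq
    have e' : F q - F (-q) = F q + -1 * F (-q) := by ring
    rw [e']
    refine e.unique ?_
    refine (i.hasSum_iff ?_).1 ?_
    · intro n hn
      have hn : Even n := by
        rw [← Nat.not_odd_iff_even]
        rintro ⟨r, hr⟩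
        exact hn ⟨r, hr.symm⟩
      simp [hn.neg_one_pow]
    · refine ((hs q hq).hasSum.mul_left (2 * q)).congr_fun fun n => ?_
      simp only [Function.comp_apply]
      rw [pow_succ q, pow_succ (-1 : ℂ), pow_mul q, pow_mul (-1 : ℂ)]; norm_num; ring

/-- The generating function of a nonnegative integer valued statistic counts its fibres. -/
theorem count {ι : Type*} {e : ι → ℕ} (hs : ∀ q : ℂ, ‖q‖ < 1 → Summable fun i => q ^ e i)
    (hF : ∀ q : ℂ, ‖q‖ < 1 → ∑' i, q ^ e i = F q) :
    GenFun (fun n => (Nat.card {i // e i = n} : ℂ)) F := fun q hq => by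
  have h := ((Equiv.sigmaFiberEquiv e).hasSum_iff (f := fun i => q ^ e i)).2 (hs q hq).hasSum
  rw [hF q hq] at h
  refine h.sigma fun n => ?_
  have h' := (h.summable.sigma_factor n).hasSum
  have e' : ∀ c : {i // e i = n}, ((fun i => q ^ e i) ∘ Equiv.sigmaFiberEquiv e) ⟨n, c⟩ = q ^ n :=
    fun c => by simp [Equiv.sigmaFiberEquiv, c.2]
  simp only [e'] at h' ⊢
  rwa [tsum_const, nsmul_eq_mul] at h'

end GenFun

/-! ### A convolution sum in the style of Liouville -/

/-- The nontrivial character modulo 3. -/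
def chi (d : ℕ) : ℤ := if d % 3 = 1 then 1 else if d % 3 = 2 then -1 else 0

/-- The indicator function of the multiples of 3. -/
def thr (d : ℕ) : ℤ := if 3 ∣ d then 1 else 0

/-- `c(n) = ∑_{d ∣ n} χ(d)`; `6 c(n)` counts the representations of `n` by `x² + xy + y²`. -/
def cc (n : ℕ) : ℤ := ∑ d ∈ n.divisors, chi d

/-- The sum of those divisors of `n` that are prime to 3. -/
def ss (n : ℕ) : ℤ := ∑ d ∈ n.divisors with ¬ 3 ∣ d, (d : ℤ)

/-- The quadruples `(a, b, x, y)` of positive integers with `a x + b y = n`. -/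
def quads (n : ℕ) : Finset (ℕ × ℕ × ℕ × ℕ) :=
  (Finset.Icc 1 n ×ˢ Finset.Icc 1 n ×ˢ Finset.Icc 1 n ×ˢ Finset.Icc 1 n).filter
    fun p => p.1 * p.2.2.1 + p.2.1 * p.2.2.2 = n

theorem mem_quads {n a b x y : ℕ} :
    (a, b, x, y) ∈ quads n ↔ 0 < a ∧ 0 < b ∧ 0 < x ∧ 0 < y ∧ a * x + b * y = n := by
  simp only [quads, Finset.mem_filter, Finset.mem_product, Finset.mem_Icc]
  constructor
  · rintro ⟨⟨h1, h2, h3, h4⟩, h⟩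
    exact ⟨h1.1, h2.1, h3.1, h4.1, h⟩
  · rintro ⟨h1, h2, h3, h4, h⟩
    refine ⟨⟨⟨h1, ?_⟩, ⟨h2, ?_⟩, ⟨h3, ?_⟩, ⟨h4, ?_⟩⟩, h⟩ <;> nlinarith

/-- `χ(a)χ(b) = [3 ∣ a - b] - [3 ∣ a + b]`; the case distinction avoids truncated subtraction. -/
theorem chi_mul (a b : ℕ) : chi a * chi b =
    (if b ≤ a then thr (a - b) else thr (b - a)) - thr (a + b) := by
  unfold chi thr
  split_ifs <;> omega

/-- Exchanging the two summands of `a x + b y`. -/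
theorem quads_swap (n : ℕ) (P : ℕ × ℕ × ℕ × ℕ → Prop) [DecidablePred P]
    (f : ℕ × ℕ × ℕ × ℕ → ℤ) :
    ∑ p ∈ quads n with P p, f p =
      ∑ p ∈ quads n with P (p.2.1, p.1, p.2.2.2, p.2.2.1), f (p.2.1, p.1, p.2.2.2, p.2.2.1) := by
  refine Finset.sum_nbij' (fun p => (p.2.1, p.1, p.2.2.2, p.2.2.1))
    (fun p => (p.2.1, p.1, p.2.2.2, p.2.2.1)) ?_ ?_ ?_ ?_ ?_
  · rintro ⟨a, b, x, y⟩ h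
    simp only [Finset.mem_filter, mem_quads] at h ⊢
    exact ⟨⟨h.1.2.1, h.1.1, h.1.2.2.2.1, h.1.2.2.1, by linarith [h.1.2.2.2.2]⟩, h.2⟩
  · rintro ⟨a, b, x, y⟩ h
    simp only [Finset.mem_filter, mem_quads] at h ⊢
    exact ⟨⟨h.1.2.1, h.1.1, h.1.2.2.2.1, h.1.2.2.1, by linarith [h.1.2.2.2.2]⟩, h.2⟩
  · rintro ⟨a, b, x, y⟩ h; rfl
  · rintro ⟨a, b, x, y⟩ h; rfl
  · rintro ⟨a, b, x, y⟩ h; rfl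

/-- The substitution `a x + b y = (a - b) x + b (x + y)`. -/
theorem quads_shear (n : ℕ) (f : ℕ → ℕ → ℕ → ℤ) :
    ∑ p ∈ quads n with p.2.1 < p.1, f (p.1 - p.2.1) p.2.1 p.2.2.1 =
      ∑ p ∈ quads n with p.2.2.1 < p.2.2.2, f p.1 p.2.1 p.2.2.1 := by
  refine Finset.sum_nbij' (fun p => (p.1 - p.2.1, p.2.1, p.2.2.1, p.2.2.1 + p.2.2.2))
    (fun p => (p.1 + p.2.1, p.2.1, p.2.2.1, p.2.2.2 - p.2.2.1)) ?_ ?_ ?_ ?_ ?_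
  · rintro ⟨a, b, x, y⟩ h
    simp only [Finset.mem_filter, mem_quads] at h ⊢
    obtain ⟨⟨h1, h2, h3, h4, h5⟩, h6⟩ := h
    obtain ⟨k, rfl⟩ := Nat.exists_eq_add_of_lt h6
    refine ⟨⟨by omega, h2, h3, by omega, ?_⟩, by omega⟩
    rw [show b + k + 1 - b = k + 1 by omega, ← h5]; ring
  · rintro ⟨a, b, x, y⟩ h
    simp only [Finset.mem_filter, mem_quads] at h ⊢
    obtain ⟨⟨h1, h2, h3, h4, h5⟩, h6⟩ := h
    obtain ⟨k, rfl⟩ := Nat.exists_eq_add_of_lt h6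
    refine ⟨⟨by omega, h2, h3, by omega, ?_⟩, by omega⟩
    rw [show x + k + 1 - x = k + 1 by omega, ← h5]; ring
  · rintro ⟨a, b, x, y⟩ h
    have h := (Finset.mem_filter.1 h).2
    exact Prod.ext (Nat.sub_add_cancel h.le) (Prod.ext rfl (Prod.ext rfl
      (Nat.add_sub_cancel_left (n := x) (m := y))))
  · rintro ⟨a, b, x, y⟩ h
    have h := (Finset.mem_filter.1 h).2
    exact Prod.ext (Nat.add_sub_cancel (n := a) (m := b)) (Prod.ext rfl (Prod.ext rfl
      (Nat.add_sub_cancel' h.le)))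
  · rintro ⟨a, b, x, y⟩ h; rfl

/-- For `x = y` the condition reads `(a + b) x = n`, so that `d = a + b` is a divisor of `n`. -/
theorem quads_diag_right {n : ℕ} (hn : n ≠ 0) (f : ℕ → ℕ → ℤ) :
    ∑ p ∈ quads n with p.2.2.1 = p.2.2.2, f p.1 p.2.1 =
      ∑ d ∈ n.divisors, ∑ l ∈ Finset.Ico 1 d, f l (d - l) := by
  rw [Finset.sum_sigma']
  refine Finset.sum_nbij' (fun p => ⟨p.1 + p.2.1, p.1⟩)
    (fun s => (s.2, s.1 - s.2, n / s.1, n / s.1)) ?_ ?_ ?_ ?_ ?_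
  · rintro ⟨a, b, x, y⟩ h
    simp only [Finset.mem_filter, mem_quads] at h
    obtain ⟨⟨h1, h2, h3, h4, h5⟩, rfl⟩ := h
    simp only [Finset.mem_sigma, Nat.mem_divisors, Finset.mem_Ico]
    exact ⟨⟨⟨x, by rw [← h5]; ring⟩, hn⟩, h1, by omega⟩
  · rintro ⟨d, l⟩ h
    simp only [Finset.mem_sigma, Nat.mem_divisors, Finset.mem_Ico] at h
    obtain ⟨⟨h1, -⟩, h2, h3⟩ := h
    simp only [Finset.mem_filter, mem_quads, and_true]
    have hp := Nat.div_pos (Nat.le_of_dvd (Nat.pos_of_ne_zero hn) h1) (by omega : 0 < d)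
    refine ⟨h2, by omega, hp, hp, ?_⟩
    rw [← add_mul, Nat.add_sub_cancel' h3.le, Nat.mul_div_cancel' h1]
  · rintro ⟨a, b, x, y⟩ h
    simp only [Finset.mem_filter, mem_quads] at h
    obtain ⟨⟨h1, h2, h3, h4, h5⟩, rfl⟩ := h
    have : n / (a + b) = x := by
      rw [← h5, ← add_mul, Nat.mul_div_cancel_left x (by omega)]
    simp only [this, Prod.mk.injEq, true_and, and_true]; omega
  · rintro ⟨d, l⟩ h
    simp only [Finset.mem_sigma, Nat.mem_divisors, Finset.mem_Ico] at h
    simp only [Nat.add_sub_cancel' h.2.2.le]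
  · rintro ⟨a, b, x, y⟩ h
    simp

/-- For `a = b` the condition reads `a (x + y) = n`; each divisor `d = x + y` comes from `d - 1`
pairs `(x, y)`. -/
theorem quads_diag_left {n : ℕ} (hn : n ≠ 0) (f : ℕ → ℤ) :
    ∑ p ∈ quads n with p.1 = p.2.1, f p.1 = ∑ d ∈ n.divisors, ((d : ℤ) - 1) * f (n / d) := by
  have e : ∀ d ∈ n.divisors, ((d : ℤ) - 1) * f (n / d) = ∑ l ∈ Finset.Ico 1 d, f (n / d) := by
    intro d hd
    have := Nat.pos_of_mem_divisors hd
    rw [Finset.sum_const, Nat.card_Ico, nsmul_eq_mul]; push_cast [this]; ring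
  rw [Finset.sum_congr rfl e, Finset.sum_sigma']
  refine Finset.sum_nbij' (fun p => ⟨p.2.2.1 + p.2.2.2, p.2.2.1⟩)
    (fun s => (n / s.1, n / s.1, s.2, s.1 - s.2)) ?_ ?_ ?_ ?_ ?_
  · rintro ⟨a, b, x, y⟩ h
    simp only [Finset.mem_filter, mem_quads] at h
    obtain ⟨⟨h1, h2, h3, h4, h5⟩, rfl⟩ := h
    simp only [Finset.mem_sigma, Nat.mem_divisors, Finset.mem_Ico]
    exact ⟨⟨⟨a, by rw [← h5]; ring⟩, hn⟩, h3, by omega⟩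
  · rintro ⟨d, l⟩ h
    simp only [Finset.mem_sigma, Nat.mem_divisors, Finset.mem_Ico] at h
    obtain ⟨⟨h1, -⟩, h2, h3⟩ := h
    simp only [Finset.mem_filter, mem_quads, and_true]
    have hp := Nat.div_pos (Nat.le_of_dvd (Nat.pos_of_ne_zero hn) h1) (by omega : 0 < d)
    refine ⟨hp, hp, h2, by omega, ?_⟩
    rw [← mul_add, Nat.add_sub_cancel' h3.le, Nat.div_mul_cancel h1]
  · rintro ⟨a, b, x, y⟩ h
    simp only [Finset.mem_filter, mem_quads] at h
    obtain ⟨⟨h1, h2, h3, h4, h5⟩, rfl⟩ := h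
    have : n / (x + y) = a := by
      rw [← h5, ← mul_add, Nat.mul_div_cancel a (by omega)]
    simp only [this, Prod.mk.injEq, true_and]; omega
  · rintro ⟨d, l⟩ h
    simp only [Finset.mem_sigma, Nat.mem_divisors, Finset.mem_Ico] at h
    simp only [Nat.add_sub_cancel' h.2.2.le]
  · rintro ⟨a, b, x, y⟩ h
    simp only [Finset.mem_filter, mem_quads] at h
    obtain ⟨⟨h1, h2, h3, h4, h5⟩, rfl⟩ := h
    have : n / (x + y) = a := by
      rw [← h5, ← mul_add, Nat.mul_div_cancel a (by omega)]
    simp only [this]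

theorem sum_trichotomy (n : ℕ) (u v : ℕ × ℕ × ℕ × ℕ → ℕ) (f : ℕ × ℕ × ℕ × ℕ → ℤ) :
    ∑ p ∈ quads n, f p = ∑ p ∈ quads n with u p < v p, f p + ∑ p ∈ quads n with u p = v p, f p +
      ∑ p ∈ quads n with v p < u p, f p := by
  simp only [Finset.sum_filter]
  rw [← Finset.sum_add_distrib, ← Finset.sum_add_distrib]
  refine Finset.sum_congr rfl fun p _ => ?_
  rcases lt_trichotomy (u p) (v p) with h | h | h
  · simp [h, h.ne, h.not_gt]
  · simp [h]
  · simp [h, h.ne', h.not_gt]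

/-- Evaluation of the convolution sum `∑ χ(a)χ(b)` over all `a x + b y = n`, after Liouville: the
sheared substitution identifies the off-diagonal parts of the sums of `[3 ∣ a - b]` and of
`[3 ∣ a + b]`, and only terms indexed by divisors of `n` survive. -/
theorem sum_chi_quads {n : ℕ} (hn : n ≠ 0) :
    ∑ p ∈ quads n, chi p.1 * chi p.2.1 =
      ∑ d ∈ n.divisors, (((d : ℤ) - 1) + 2 * (((d : ℤ) - 1) * thr (n / d)) -
        2 * (∑ l ∈ Finset.Ico 1 d, thr l) - ((d : ℤ) - 1) * thr d) := by
  have h0 : thr 0 = 1 := rfl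
  -- the sum of `[3 ∣ a - b]`
  have e1 : ∑ p ∈ quads n, (if p.2.1 ≤ p.1 then thr (p.1 - p.2.1) else thr (p.2.1 - p.1)) =
      ∑ d ∈ n.divisors, ((d : ℤ) - 1) + 2 * ∑ p ∈ quads n with p.2.2.1 < p.2.2.2, thr p.1 := by
    rw [sum_trichotomy n (fun p => p.1) (fun p => p.2.1)]
    have a1 : ∑ p ∈ quads n with p.2.1 < p.1,
        (if p.2.1 ≤ p.1 then thr (p.1 - p.2.1) else thr (p.2.1 - p.1)) =
        ∑ p ∈ quads n with p.2.2.1 < p.2.2.2, thr p.1 := by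
      rw [← quads_shear n (fun a _ _ => thr a)]
      refine Finset.sum_congr rfl fun p hp => ?_
      rw [if_pos (Finset.mem_filter.1 hp).2.le]
    have a2 : ∑ p ∈ quads n with p.1 < p.2.1,
        (if p.2.1 ≤ p.1 then thr (p.1 - p.2.1) else thr (p.2.1 - p.1)) =
        ∑ p ∈ quads n with p.2.2.1 < p.2.2.2, thr p.1 := by
      rw [quads_swap, ← a1]
      refine Finset.sum_congr rfl fun p hp => ?_
      have := (Finset.mem_filter.1 hp).2
      rw [if_pos this.le, if_neg (by simpa using this)]
    have a3 : ∑ p ∈ quads n with p.1 = p.2.1,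
        (if p.2.1 ≤ p.1 then thr (p.1 - p.2.1) else thr (p.2.1 - p.1)) =
        ∑ d ∈ n.divisors, ((d : ℤ) - 1) := by
      have := quads_diag_left hn (fun _ => 1)
      simp only [mul_one] at this
      rw [← this]
      refine Finset.sum_congr rfl fun p hp => ?_
      rw [(Finset.mem_filter.1 hp).2]
      simp [h0]
    rw [a1, a2, a3]; ring
  -- the sum of `[3 ∣ a + b]`
  have e2 : ∑ p ∈ quads n, thr (p.1 + p.2.1) =
      ∑ d ∈ n.divisors, ((d : ℤ) - 1) * thr d + 2 * ∑ p ∈ quads n with p.2.1 < p.1, thr p.1 := by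
    rw [sum_trichotomy n (fun p => p.2.2.1) (fun p => p.2.2.2)]
    have a1 : ∑ p ∈ quads n with p.2.2.1 < p.2.2.2, thr (p.1 + p.2.1) =
        ∑ p ∈ quads n with p.2.1 < p.1, thr p.1 := by
      rw [← quads_shear n (fun a b _ => thr (a + b))]
      refine Finset.sum_congr rfl fun p hp => ?_
      rw [Nat.sub_add_cancel (Finset.mem_filter.1 hp).2.le]
    have a2 : ∑ p ∈ quads n with p.2.2.2 < p.2.2.1, thr (p.1 + p.2.1) =
        ∑ p ∈ quads n with p.2.1 < p.1, thr p.1 := by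
      rw [quads_swap, ← a1]
      refine Finset.sum_congr rfl fun p hp => ?_
      rw [add_comm]
    have a3 : ∑ p ∈ quads n with p.2.2.1 = p.2.2.2, thr (p.1 + p.2.1) =
        ∑ d ∈ n.divisors, ((d : ℤ) - 1) * thr d := by
      rw [quads_diag_right hn (fun a b => thr (a + b))]
      refine Finset.sum_congr rfl fun d hd => ?_
      have hd := Nat.pos_of_mem_divisors hd
      have : ∀ l ∈ Finset.Ico 1 d, thr (l + (d - l)) = thr d := fun l hl => by
        rw [Nat.add_sub_cancel' (Finset.mem_Ico.1 hl).2.le]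
      rw [Finset.sum_congr rfl this, Finset.sum_const, Nat.card_Ico, nsmul_eq_mul]
      push_cast [hd]; ring
    rw [a1, a2, a3]; ring
  -- comparing the two ways of splitting the sum of `[3 ∣ a]`
  have e3 : ∑ p ∈ quads n with p.2.2.1 < p.2.2.2, thr p.1 +
      ∑ d ∈ n.divisors, ∑ l ∈ Finset.Ico 1 d, thr l =
      ∑ p ∈ quads n with p.2.1 < p.1, thr p.1 +
      ∑ d ∈ n.divisors, ((d : ℤ) - 1) * thr (n / d) := by
    have b1 := sum_trichotomy n (fun p => p.2.2.1) (fun p => p.2.2.2) (fun p => thr p.1)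
    have b2 := sum_trichotomy n (fun p => p.1) (fun p => p.2.1) (fun p => thr p.1)
    rw [quads_diag_right hn (fun a _ => thr a)] at b1
    rw [quads_diag_left hn] at b2
    have b3 : ∑ p ∈ quads n with p.2.2.2 < p.2.2.1, thr p.1 =
        ∑ p ∈ quads n with p.1 < p.2.1, thr p.1 := by
      rw [quads_swap, quads_swap n (fun p => p.1 < p.2.1)]
      exact (quads_shear n (fun _ b _ => thr b)).symm
    linarith
  simp only [chi_mul]
  rw [Finset.sum_sub_distrib, e1, e2]
  simp only [Finset.sum_sub_distrib, Finset.sum_add_distrib, ← Finset.mul_sum]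
  linarith

theorem sum_thr (d : ℕ) : 3 * ∑ l ∈ Finset.Ico 1 (d + 1), thr l = d - (d % 3 : ℕ) := by
  induction d with
  | zero => simp
  | succ d ih =>
    rw [Finset.sum_Ico_succ_top (by omega), mul_add, ih]
    unfold thr
    split_ifs <;> omega

/-- Divisors `d` with `3 ∣ n/d` correspond to the divisors `3d` of `n` that are multiples of 3. -/
theorem sum_div_three {n : ℕ} (g : ℕ → ℤ) :
    ∑ d ∈ n.divisors, g d * thr (n / d) = ∑ d ∈ n.divisors, g (d / 3) * thr d := by
  simp only [thr, mul_ite, mul_one, mul_zero, ← Finset.sum_filter]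
  refine Finset.sum_nbij' (fun d => 3 * d) (fun d => d / 3) ?_ ?_ ?_ ?_ ?_
  · intro d h
    simp only [Finset.mem_filter, Nat.mem_divisors] at h ⊢
    obtain ⟨⟨⟨k, rfl⟩, h0⟩, h3⟩ := h
    have : 0 < d := Nat.pos_of_ne_zero (by rintro rfl; simp at h0)
    rw [Nat.mul_div_cancel_left k this] at h3
    exact ⟨⟨by rw [mul_comm]; exact mul_dvd_mul_left d h3, h0⟩, dvd_mul_right 3 d⟩
  · intro d h
    simp only [Finset.mem_filter, Nat.mem_divisors] at h ⊢
    obtain ⟨⟨⟨k, rfl⟩, h0⟩, ⟨m, rfl⟩⟩ := h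
    have : 0 < m := Nat.pos_of_ne_zero (by rintro rfl; simp at h0)
    rw [Nat.mul_div_cancel_left m (by norm_num)]
    refine ⟨⟨⟨3 * k, by ring⟩, h0⟩, ⟨k, ?_⟩⟩
    rw [show 3 * m * k = m * (3 * k) by ring, Nat.mul_div_cancel_left _ this]
  · intro d _; simp
  · intro d h
    exact Nat.mul_div_cancel' (Finset.mem_filter.1 h).2
  · intro d _; simp

/-- The convolution sum in closed form: `3 ∑ χ(a)χ(b) = s(n) - c(n)`. -/
theorem three_mul_sum_chi_quads {n : ℕ} (hn : n ≠ 0) :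
    3 * ∑ p ∈ quads n, chi p.1 * chi p.2.1 = ss n - cc n := by
  rw [sum_chi_quads hn]
  simp only [Finset.sum_sub_distrib, Finset.sum_add_distrib, ← Finset.mul_sum]
  rw [sum_div_three (fun d => (d : ℤ) - 1)]
  unfold ss cc
  rw [Finset.sum_filter]
  simp only [Finset.mul_sum, ← Finset.sum_sub_distrib, ← Finset.sum_add_distrib]
  refine Finset.sum_congr rfl fun d hd => ?_
  obtain ⟨k, rfl⟩ := Nat.exists_eq_add_of_lt (Nat.pos_of_mem_divisors hd)
  have h := sum_thr (0 + k)
  simp only [← Finset.mul_sum]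
  unfold thr chi at *
  split_ifs <;> push_cast at * <;> omega

theorem sum_cc_antidiagonal (n : ℕ) :
    ∑ p ∈ Finset.HasAntidiagonal.antidiagonal n, cc p.1 * cc p.2 =
      ∑ p ∈ quads n, chi p.1 * chi p.2.1 := by
  have e : ∀ p : ℕ × ℕ, cc p.1 * cc p.2 =
      ∑ q ∈ p.1.divisors ×ˢ p.2.divisors, chi q.1 * chi q.2 := fun p => by
    rw [cc, cc, Finset.sum_mul_sum, Finset.sum_product]
  simp only [e]
  rw [Finset.sum_sigma']
  refine Finset.sum_nbij' (fun s => (s.2.1, s.2.2, s.1.1 / s.2.1, s.1.2 / s.2.2))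
    (fun p => ⟨(p.1 * p.2.2.1, p.2.1 * p.2.2.2), (p.1, p.2.1)⟩) ?_ ?_ ?_ ?_ ?_
  · rintro ⟨⟨i, j⟩, ⟨a, b⟩⟩ h
    simp only [Finset.mem_sigma, Finset.HasAntidiagonal.mem_antidiagonal, Finset.mem_product,
      Nat.mem_divisors] at h
    obtain ⟨rfl, ⟨⟨x, rfl⟩, hx⟩, ⟨⟨y, rfl⟩, hy⟩⟩ := h
    obtain ⟨ha, hx⟩ := mul_ne_zero_iff.1 hx
    obtain ⟨hb, hy⟩ := mul_ne_zero_iff.1 hy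
    rw [mem_quads, Nat.mul_div_cancel_left _ (Nat.pos_of_ne_zero ha),
      Nat.mul_div_cancel_left _ (Nat.pos_of_ne_zero hb)]
    exact ⟨Nat.pos_of_ne_zero ha, Nat.pos_of_ne_zero hb, Nat.pos_of_ne_zero hx,
      Nat.pos_of_ne_zero hy, rfl⟩
  · rintro ⟨a, b, x, y⟩ h
    rw [mem_quads] at h
    obtain ⟨h1, h2, h3, h4, h5⟩ := h
    simp only [Finset.mem_sigma, Finset.HasAntidiagonal.mem_antidiagonal, Finset.mem_product,
      Nat.mem_divisors]
    exact ⟨h5, ⟨dvd_mul_right _ _, by positivity⟩, ⟨dvd_mul_right _ _, by positivity⟩⟩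
  · rintro ⟨⟨i, j⟩, ⟨a, b⟩⟩ h
    simp only [Finset.mem_sigma, Finset.mem_product, Nat.mem_divisors] at h
    simp only [Nat.mul_div_cancel' h.2.1.1, Nat.mul_div_cancel' h.2.2.1]
  · rintro ⟨a, b, x, y⟩ h
    rw [mem_quads] at h
    simp only [Nat.mul_div_cancel_left _ h.1, Nat.mul_div_cancel_left _ h.2.1]
  · rintro ⟨⟨i, j⟩, ⟨a, b⟩⟩ h
    rfl

/-! ### Lambert series -/

/-- Divisors of `2 n`: the doubles of the divisors of `n`, and the odd divisors of `n`. -/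
theorem sum_divisors_two_mul (f : ℕ → ℤ) {n : ℕ} (hn : n ≠ 0) :
    ∑ d ∈ (2 * n).divisors, f d =
      ∑ d ∈ n.divisors, f (2 * d) + ∑ d ∈ n.divisors with ¬ 2 ∣ d, f d := by
  rw [← Finset.sum_filter_add_sum_filter_not (2 * n).divisors (fun d => 2 ∣ d)]
  congr 1
  · refine Finset.sum_nbij' (fun d => d / 2) (fun d => 2 * d) ?_ ?_ ?_ ?_ ?_
    · intro d h
      simp only [Finset.mem_filter, Nat.mem_divisors] at h ⊢
      obtain ⟨⟨h1, -⟩, ⟨k, rfl⟩⟩ := h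
      rw [Nat.mul_div_cancel_left k (by norm_num)]
      exact ⟨Nat.dvd_of_mul_dvd_mul_left (by norm_num) h1, hn⟩
    · intro d h
      simp only [Finset.mem_filter, Nat.mem_divisors] at h ⊢
      exact ⟨⟨mul_dvd_mul_left 2 h.1, by omega⟩, dvd_mul_right 2 d⟩
    · intro d h
      exact Nat.mul_div_cancel' (Finset.mem_filter.1 h).2
    · intro d _; simp
    · intro d h
      rw [Nat.mul_div_cancel' (Finset.mem_filter.1 h).2]
  · refine Finset.sum_congr ?_ fun _ _ => rfl
    ext d
    simp only [Finset.mem_filter, Nat.mem_divisors]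
    constructor
    · rintro ⟨⟨h1, -⟩, h2⟩
      exact ⟨⟨((Nat.prime_two.coprime_iff_not_dvd.2 h2).symm).dvd_of_dvd_mul_left h1, hn⟩, h2⟩
    · rintro ⟨⟨h1, -⟩, h2⟩
      exact ⟨⟨h1.mul_left 2, by omega⟩, h2⟩

theorem sum_odd_divisors_two_mul (f : ℕ → ℤ) {n : ℕ} (hn : n ≠ 0) :
    ∑ d ∈ (2 * n).divisors with ¬ 2 ∣ d, f d = ∑ d ∈ n.divisors with ¬ 2 ∣ d, f d := by
  have := sum_divisors_two_mul (fun d => if ¬ 2 ∣ d then f d else 0) hn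
  simp only [dvd_mul_right, not_true_eq_false, if_false, Finset.sum_const_zero, zero_add] at this
  rw [Finset.sum_filter, this]
  exact Finset.sum_congr rfl fun d hd => if_pos (Finset.mem_filter.1 hd).2

theorem sum_odd_divisors_of_odd (f : ℕ → ℤ) {n : ℕ} (hn : ¬ 2 ∣ n) :
    ∑ d ∈ n.divisors with ¬ 2 ∣ d, f d = ∑ d ∈ n.divisors, f d := by
  rw [Finset.filter_true_of_mem]
  intro d hd h
  exact hn (h.trans (Nat.dvd_of_mem_divisors hd))

theorem chi_two_mul (d : ℕ) : chi (2 * d) = - chi d := by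
  unfold chi; split_ifs <;> omega

theorem cc_two_mul {n : ℕ} (hn : n ≠ 0) :
    cc (2 * n) = - cc n + ∑ d ∈ n.divisors with ¬ 2 ∣ d, chi d := by
  unfold cc
  rw [sum_divisors_two_mul _ hn]
  simp only [chi_two_mul, Finset.sum_neg_distrib]

theorem cc_two_mul_odd {n : ℕ} (hn : ¬ 2 ∣ n) : cc (2 * n) = 0 := by
  rw [cc_two_mul (by rintro rfl; simp at hn), sum_odd_divisors_of_odd _ hn]
  simp [cc]

theorem cc_four_mul (n : ℕ) : cc (4 * n) = cc n := by
  rcases eq_or_ne n 0 with rfl | hn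
  · simp
  rw [show 4 * n = 2 * (2 * n) by ring, cc_two_mul (by omega), sum_odd_divisors_two_mul _ hn,
    cc_two_mul hn]
  ring

theorem ss_eq (n : ℕ) : ss n = ∑ d ∈ n.divisors, if ¬ 3 ∣ d then (d : ℤ) else 0 := by
  rw [ss, Finset.sum_filter]

theorem ss_two_mul {n : ℕ} (hn : n ≠ 0) :
    ss (2 * n) = 2 * ss n +
      ∑ d ∈ n.divisors with ¬ 2 ∣ d, if ¬ 3 ∣ d then (d : ℤ) else 0 := by
  rw [ss_eq, ss_eq, sum_divisors_two_mul _ hn, Finset.mul_sum]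
  congr 1
  refine Finset.sum_congr rfl fun d _ => ?_
  split_ifs <;> push_cast <;> omega

theorem ss_two_mul_odd {n : ℕ} (hn : ¬ 2 ∣ n) : ss (2 * n) = 3 * ss n := by
  rw [ss_two_mul (by rintro rfl; simp at hn), sum_odd_divisors_of_odd _ hn, ← ss_eq]
  ring

theorem ss_four_mul (n : ℕ) : ss (4 * n) = 3 * ss (2 * n) - 2 * ss n := by
  rcases eq_or_ne n 0 with rfl | hn
  · simp [ss]
  have := ss_two_mul hn
  rw [show 4 * n = 2 * (2 * n) by ring, ss_two_mul (by omega), sum_odd_divisors_two_mul _ hn]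
  linarith

/-- Polynomially bounded coefficients give a power series convergent on the unit disc. -/
theorem GenFun.of_bound {a : ℕ → ℂ} {k : ℕ} (h : ∀ n, ‖a n‖ ≤ (n : ℝ) ^ k) :
    GenFun a (fun q => ∑' n, a n * q ^ n) := by
  intro q hq
  refine (Summable.of_norm_bounded
    (summable_pow_mul_geometric_of_norm_lt_one (R := ℝ) k (r := ‖q‖) (by simpa using hq))
    fun n => ?_).hasSum
  rw [norm_mul, norm_pow]
  gcongr
  exact h n

theorem GenFun.one : GenFun (fun n => if n = 0 then 1 else 0) (fun _ => 1) := by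
  intro q _
  have := hasSum_ite_eq (α := ℂ) 0 (1 : ℂ)
  refine this.congr_fun ?_
  intro n
  split_ifs with h <;> simp [h]

/-- `∑ c(n) qⁿ`. -/
noncomputable def lamC (q : ℂ) : ℂ := ∑' n, (cc n : ℂ) * q ^ n

/-- `∑ s(n) qⁿ`, with `s(n)` the sum of the divisors of `n` that are prime to 3. -/
noncomputable def lamS (q : ℂ) : ℂ := ∑' n, (ss n : ℂ) * q ^ n

theorem genFun_lamC : GenFun (fun n => (cc n : ℂ)) lamC := by
  refine GenFun.of_bound (k := 1) fun n => ?_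
  rw [Complex.norm_intCast, ← Int.cast_abs]
  have : |cc n| ≤ n := by
    refine (Finset.abs_sum_le_sum_abs _ _).trans ?_
    refine (Finset.sum_le_card_nsmul _ _ 1 fun d _ => ?_).trans ?_
    · unfold chi; split_ifs <;> simp
    · simpa using Nat.card_divisors_le_self n
  rw [pow_one]; exact_mod_cast this

theorem genFun_lamS : GenFun (fun n => (ss n : ℂ)) lamS := by
  refine GenFun.of_bound (k := 2) fun n => ?_
  rw [Complex.norm_intCast, ← Int.cast_abs]
  have : |ss n| ≤ n ^ 2 := by
    rw [ss_eq]
    refine (Finset.abs_sum_le_sum_abs _ _).trans ?_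
    refine (Finset.sum_le_card_nsmul _ _ (n : ℤ) fun d hd => ?_).trans ?_
    · have := Nat.divisor_le hd
      split_ifs <;> simp; omega
    · rw [nsmul_eq_mul, sq]
      have := Nat.card_divisors_le_self n
      gcongr
  exact_mod_cast this

theorem GenFun.ext {a b : ℕ → ℂ} {F G : ℂ → ℂ} (h : GenFun a F) (h' : GenFun b G)
    (e : ∀ n, a n = b n) {q : ℂ} (hq : ‖q‖ < 1) : F q = G q := by
  obtain rfl : a = b := funext e
  exact (h q hq).unique (h' q hq)

theorem lamS_eq {q : ℂ} (hq : ‖q‖ < 1) : lamS q = lamC q + 3 * lamC q ^ 2 := by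
  rw [sq]
  refine genFun_lamS.ext (genFun_lamC.add ((genFun_lamC.mul genFun_lamC).smul 3)) (fun n => ?_) hq
  rcases eq_or_ne n 0 with rfl | hn
  · simp [ss, cc]
  have h := three_mul_sum_chi_quads hn
  rw [← sum_cc_antidiagonal] at h
  have : ss n = cc n + 3 * ∑ p ∈ Finset.HasAntidiagonal.antidiagonal n, cc p.1 * cc p.2 := by
    linarith
  rw [this]; push_cast; rfl

/-- The theta series `1 + 6 ∑ c(n) qⁿ` of `x² + xy + y²`. -/
noncomputable def thL (q : ℂ) : ℂ := 1 + 6 * lamC q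

/-- The Eisenstein series `1 + 12 ∑ s(n) qⁿ`. -/
noncomputable def eisS (q : ℂ) : ℂ := 1 + 12 * lamS q

/-- The convolution sum in terms of generating functions: the square of `L` is an Eisenstein
series. -/
theorem thL_sq {q : ℂ} (hq : ‖q‖ < 1) : thL q ^ 2 = eisS q := by
  rw [eisS, thL, lamS_eq hq]; ring

/-- `c` vanishes at `2m` for odd `m`, and `c(4m) = c(m)`. -/
theorem thL_add_neg {q : ℂ} (hq : ‖q‖ < 1) : thL q + thL (-q) = 2 * thL (q ^ 4) := by
  have : lamC q + lamC (-q) = 2 * lamC (q ^ 4) := by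
    refine (genFun_lamC.add genFun_lamC.comp_neg).ext
      ((genFun_lamC.comp_pow (k := 4) (by norm_num)).smul 2) (fun n => ?_) hq
    rcases Nat.even_or_odd' n with ⟨k, rfl | rfl⟩
    · rw [(even_two_mul k).neg_one_pow]
      rcases Nat.even_or_odd' k with ⟨j, rfl | rfl⟩
      · rw [show 2 * (2 * j) = 4 * j by ring, if_pos (dvd_mul_right 4 j), cc_four_mul,
          Nat.mul_div_cancel_left j (by norm_num)]
        ring
      · rw [if_neg (by omega), cc_two_mul_odd (by omega)]; simp
    · rw [(odd_two_mul_add_one k).neg_one_pow, if_neg (by omega)]; ring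
  unfold thL
  linear_combination 6 * this

/-- A linear relation encoding the recursion `s(4m) = 3s(2m) - 2s(m)`, and `s(2m) = 3s(m)` for
odd `m`. -/
theorem eisS_relation {q : ℂ} (hq : ‖q‖ < 1) :
    20 * eisS (q ^ 4) - (eisS q + eisS (-q)) =
      16 * eisS (q ^ 8) - 2 * eisS (q ^ 2) + 4 * eisS (-q ^ 2) := by
  have : 20 * lamS (q ^ 4) + 2 * lamS (q ^ 2) =
      lamS q + lamS (-q) + (16 * lamS (q ^ 8) + 4 * lamS (-q ^ 2)) := by
    have h := genFun_lamS
    refine (((h.comp_pow (k := 4) (by norm_num)).smul 20).add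
      ((h.comp_pow (k := 2) (by norm_num)).smul 2)).ext
      ((h.add h.comp_neg).add (((h.comp_pow (k := 8) (by norm_num)).smul 16).add
      ((h.comp_neg.comp_pow (k := 2) (by norm_num)).smul 4))) (fun n => ?_) hq
    rcases Nat.even_or_odd' n with ⟨m, rfl | rfl⟩
    · rw [(even_two_mul m).neg_one_pow, if_pos (dvd_mul_right 2 m), if_pos (dvd_mul_right 2 m),
        Nat.mul_div_cancel_left m (by norm_num)]
      rcases Nat.even_or_odd' m with ⟨k, rfl | rfl⟩
      · rw [(even_two_mul k).neg_one_pow, show 2 * (2 * k) = 4 * k by ring,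
          if_pos (dvd_mul_right 4 k), Nat.mul_div_cancel_left k (by norm_num)]
        rcases Nat.even_or_odd' k with ⟨j, rfl | rfl⟩
        · rw [show 4 * (2 * j) = 8 * j by ring, if_pos (dvd_mul_right 8 j),
            Nat.mul_div_cancel_left j (by norm_num)]
          have h1 := ss_four_mul (2 * j)
          have h2 := ss_four_mul j
          rw [show 4 * (2 * j) = 8 * j by ring, show 2 * (2 * j) = 4 * j by ring] at h1
          rw [show 2 * (2 * j) = 4 * j by ring]
          have h3 : 20 * ss (2 * j) + 2 * ss (4 * j) =
            2 * ss (8 * j) + (16 * ss j + 4 * ss (4 * j)) := by linarith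
          have h4 := congrArg (Int.cast (R := ℂ)) h3
          push_cast at h4
          linear_combination h4
        · rw [if_neg (by omega)]
          have h1 := ss_two_mul_odd (n := 2 * j + 1) (by omega)
          rw [ss_four_mul, h1]
          push_cast; ring
      · rw [if_neg (by omega), if_neg (by omega), (odd_two_mul_add_one k).neg_one_pow,
          ss_two_mul_odd (by omega)]
        push_cast; ring
    · rw [(odd_two_mul_add_one m).neg_one_pow, if_neg (by omega), if_neg (by omega),
        if_neg (by omega), if_neg (by omega)]
      ring
  unfold eisS
  linear_combination 12 * this

/-- `(L(q) + 2 L(q⁴)) / 3`, which will be seen to be the theta series of `x² + 3 y²`. -/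
noncomputable def lamT (q : ℂ) : ℂ := (thL q + 2 * thL (q ^ 4)) / 3

theorem genFun_lamT : ∃ a : ℕ → ℂ, GenFun a lamT ∧ a 0 = 1 ∧ a 1 = 2 := by
  have h := (GenFun.one.add (genFun_lamC.smul 6))
  have h' := (h.add ((h.comp_pow (k := 4) (by norm_num)).smul 2)).smul (1 / 3)
  have e : lamT = fun q => 1 / 3 * (1 + 6 * lamC q + 2 * (1 + 6 * lamC (q ^ 4))) := by
    funext q
    unfold lamT thL; ring
  refine ⟨_, e ▸ h', ?_, ?_⟩
  · simp [cc]; norm_num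
  · simp [cc, chi]; norm_num

theorem lamT_neg {q : ℂ} (hq : ‖q‖ < 1) : lamT (-q) = (4 * thL (q ^ 4) - thL q) / 3 := by
  unfold lamT
  rw [Even.neg_pow (by decide)]
  linear_combination thL_add_neg hq / 3

/-- The linear functional equation of `lamT`, shared with `tt` (`tt_add_neg`). -/
theorem lamT_add_neg {q : ℂ} (hq : ‖q‖ < 1) :
    lamT q + lamT (-q) = 4 * lamT (q ^ 4) - 2 * lamT (-q ^ 4) := by
  rw [lamT_neg hq, lamT_neg (pow_lt_one_norm hq (by norm_num))]
  unfold lamT; ring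

theorem thL_mul_thL {q : ℂ} (hq : ‖q‖ < 1) :
    4 * (thL q * thL (q ^ 4)) = 4 * eisS (q ^ 4) + eisS q - eisS (-q) := by
  have h1 := thL_sq hq
  have h2 := thL_sq (q := -q) (by rwa [norm_neg])
  have h3 := thL_sq (q := q ^ 4) (pow_lt_one_norm hq (by norm_num))
  rw [← h1, ← h2, ← h3, show thL (-q) = 2 * thL (q ^ 4) - thL q by
    linear_combination thL_add_neg hq]
  ring

/-- The quadratic functional equation of `lamT`, shared with `tt` (`tt_mul_neg`). -/
theorem lamT_mul_neg {q : ℂ} (hq : ‖q‖ < 1) : lamT q * lamT (-q) = lamT (-q ^ 2) ^ 2 := by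
  have hq2 : ‖q ^ 2‖ < 1 := pow_lt_one_norm hq (by norm_num)
  rw [lamT_neg hq, lamT_neg hq2, lamT]
  have h1 := thL_mul_thL hq
  have h2 := thL_mul_thL hq2
  have h3 := thL_sq hq
  have h4 := thL_sq hq2
  have h5 := thL_sq (q := q ^ 4) (pow_lt_one_norm hq (by norm_num))
  have h6 := thL_sq (q := q ^ 8) (pow_lt_one_norm hq (by norm_num))
  have h7 := eisS_relation hq
  rw [← pow_mul] at h2 ⊢
  norm_num only at h2 ⊢
  linear_combination h1 / 18 + h2 * 2 / 9 + h7 / 18 - h3 / 9 - h4 / 9 + 8 * h5 / 9 - 16 * h6 / 9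

theorem lamT_sq_sub {q : ℂ} (hq : ‖q‖ < 1) :
    lamT q ^ 2 - lamT (-q) ^ 2 = (eisS q - eisS (-q)) / 3 := by
  rw [lamT_neg hq, lamT]
  have h1 := thL_mul_thL hq
  have h5 := thL_sq (q := q ^ 4) (pow_lt_one_norm hq (by norm_num))
  linear_combination h1 / 3 - 4 * h5 / 3

/-! ### The theta series of `x² + 3y²` -/

theorem genFun_ph : ∃ a, GenFun a ph := by
  have e : ∀ (q : ℂ) (n : ℤ), q ^ (n.natAbs ^ 2) = q ^ (n ^ 2) := fun q n => by
    rw [← zpow_natCast]; simp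
  exact ⟨_, GenFun.count (e := fun n : ℤ => n.natAbs ^ 2)
    (fun q hq => by simpa only [e] using summable_ph hq) (fun q hq => by simp only [e, ph])⟩

theorem toNat_tri (n : ℤ) : ((n * (2 * n + 1)).toNat : ℤ) = n * (2 * n + 1) := by
  refine Int.toNat_of_nonneg ?_
  rcases le_or_gt 0 n with h | h
  · positivity
  · exact mul_nonneg_of_nonpos_of_nonpos h.le (by omega)

theorem genFun_ps : ∃ a, GenFun a ps := by
  have e : ∀ (q : ℂ) (n : ℤ), q ^ ((n * (2 * n + 1)).toNat) = q ^ (n * (2 * n + 1)) :=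
    fun q n => by rw [← zpow_natCast, toNat_tri]
  exact ⟨_, GenFun.count (e := fun n : ℤ => (n * (2 * n + 1)).toNat)
    (fun q hq => by simpa only [e] using summable_ps hq) (fun q hq => by simp only [e, ps])⟩

theorem ph_zero : ph 0 = 1 := by
  rw [ph, tsum_eq_single 0]
  · simp
  · intro n hn; exact zero_zpow _ (pow_ne_zero 2 hn)

theorem ps_zero : ps 0 = 1 := by
  rw [ps, tsum_eq_single 0]
  · simp
  · intro n hn; exact zero_zpow _ (mul_ne_zero hn (by omega))

/-- The theta series of `x² + 3 y²`. -/
noncomputable def tt (q : ℂ) : ℂ := ph q * ph (q ^ 3)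

/-- `ψ(q) ψ(q³)`. -/
noncomputable def PP (q : ℂ) : ℂ := ps q * ps (q ^ 3)

/-- `φ(q) φ(q³) + 4 q ψ(q²) ψ(q⁶)`, the theta series of `x² + xy + y²`. -/
noncomputable def AA (q : ℂ) : ℂ := tt q + 4 * q * PP (q ^ 2)

theorem PP_dissect {q : ℂ} (h0 : q ≠ 0) (hq : ‖q‖ < 1) :
    PP q = ps (q ^ 4) * ph (q ^ 6) + q * ph (q ^ 2) * ps (q ^ 12) := by
  rw [PP, ps_mul_ps_cube h0 hq]; ring

theorem tt_dissect {q : ℂ} (h0 : q ≠ 0) (hq : ‖q‖ < 1) :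
    tt q = AA (q ^ 4) + 2 * q * PP (q ^ 2) := by
  have h1 := ph_dissect h0 hq
  have h2 := ph_dissect (pow_ne_zero 3 h0) (pow_lt_one_norm hq (k := 3) (by norm_num))
  have h3 := PP_dissect (pow_ne_zero 2 h0) (pow_lt_one_norm hq (k := 2) (by norm_num))
  rw [tt, h1, h2, h3, AA, tt, PP]
  ring_nf

theorem tt_dissect_neg {q : ℂ} (h0 : q ≠ 0) (hq : ‖q‖ < 1) :
    tt (-q) = AA (q ^ 4) - 2 * q * PP (q ^ 2) := by
  have h := tt_dissect (neg_ne_zero.2 h0) (by rwa [norm_neg])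
  rw [h, Even.neg_pow (by decide), Even.neg_pow (by decide)]; ring

theorem AA_eq {q : ℂ} (h0 : q ≠ 0) (hq : ‖q‖ < 1) :
    AA q = 2 * tt q - tt (-q) := by
  rw [AA, tt_dissect_neg h0 hq, tt_dissect h0 hq]; ring

/-- The 2-dissection of the theta series of `x² + xy + y²`. -/
theorem AA_dissect {q : ℂ} (h0 : q ≠ 0) (hq : ‖q‖ < 1) :
    AA q = AA (q ^ 4) + 6 * q * PP (q ^ 2) := by
  rw [AA_eq h0 hq, tt_dissect_neg h0 hq, tt_dissect h0 hq]; ring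

theorem tt_add_neg {q : ℂ} (h0 : q ≠ 0) (hq : ‖q‖ < 1) :
    tt q + tt (-q) = 4 * tt (q ^ 4) - 2 * tt (-q ^ 4) := by
  have h := AA_eq (pow_ne_zero 4 h0) (pow_lt_one_norm hq (k := 4) (by norm_num))
  rw [tt_dissect_neg h0 hq, tt_dissect h0 hq, h]; ring

theorem tt_mul_neg {q : ℂ} (h0 : q ≠ 0) (hq : ‖q‖ < 1) :
    tt q * tt (-q) = tt (-q ^ 2) ^ 2 := by
  have h1 := ph_mul_ph_neg h0 hq
  have h2 := ph_mul_ph_neg (pow_ne_zero 3 h0) (pow_lt_one_norm hq (k := 3) (by norm_num))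
  have e1 : (-q) ^ 3 = -q ^ 3 := by ring
  have e2 : (-q ^ 2) ^ 3 = -(q ^ 3) ^ 2 := by ring
  rw [tt, tt, tt, e1, e2, mul_pow, ← h1, ← h2]; ring

theorem genFun_PP : ∃ a, GenFun a PP := by
  obtain ⟨a, ha⟩ := genFun_ps
  exact ⟨_, ha.mul (ha.comp_pow (k := 3) (by norm_num))⟩

theorem genFun_tt : ∃ a, GenFun a tt ∧ a 0 = 1 ∧ a 1 = 2 := by
  obtain ⟨b, hb⟩ := genFun_ph
  obtain ⟨p, hp⟩ := genFun_PP
  have h := hb.mul (hb.comp_pow (k := 3) (by norm_num))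
  have h' := h.add (((hp.comp_pow (k := 2) (by norm_num)).shift 1).smul 4)
  have h'' := (h'.comp_pow (k := 4) (by norm_num)).add
    (((hp.comp_pow (k := 2) (by norm_num)).shift 1).smul 2)
  have u := h.unique h'' (eventually_small _ fun q h0 hq => by
    have := tt_dissect h0 hq
    rw [AA, tt, tt] at this
    linear_combination this)
  refine ⟨_, h, ?_, ?_⟩
  · rw [← h.apply_zero]; simp [ph_zero]
  · refine (congrFun u 1).trans ?_
    simp [← hp.apply_zero, PP, ps_zero]

/-- A sequence is determined by its first two terms and the coefficient form of the two functional
equations `F(q) + F(-q) = 4 F(q⁴) - 2 F(-q⁴)` and `F(q) F(-q) = F(-q²)²`. -/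
theorem coeff_unique {a b : ℕ → ℂ} (a0 : a 0 = 1) (a1 : a 1 = 2) (b0 : b 0 = 1) (b1 : b 1 = 2)
    (f1 : ∀ {c : ℕ → ℂ}, c = a ∨ c = b → ∀ n, c n + (-1) ^ n * c n =
      4 * (if 4 ∣ n then c (n / 4) else 0) - 2 * (if 4 ∣ n then (-1) ^ (n / 4) * c (n / 4) else 0))
    (f2 : ∀ {c : ℕ → ℂ}, c = a ∨ c = b → ∀ n,
      ∑ p ∈ Finset.HasAntidiagonal.antidiagonal n, c p.1 * ((-1) ^ p.2 * c p.2) =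
      if 2 ∣ n then ∑ p ∈ Finset.HasAntidiagonal.antidiagonal (n / 2),
        ((-1) ^ p.1 * c p.1) * ((-1) ^ p.2 * c p.2) else 0) : a = b := by
  have even_step : ∀ n, 0 < n → 2 ∣ n → a (n / 4) = b (n / 4) →
      a n = b n := by
    intro n hn h2 h4
    have u := f1 (Or.inl rfl) n
    have v := f1 (Or.inr rfl) n
    rw [(even_iff_two_dvd.2 h2).neg_one_pow] at u v
    rw [h4] at u
    linear_combination (u - v) / 2
  funext n
  induction n using Nat.strong_induction_on with
  | _ n ih =>
  rcases Nat.even_or_odd' n with ⟨k, rfl | rfl⟩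
  · rcases Nat.eq_zero_or_pos k with rfl | hk
    · simp [a0, b0]
    · exact even_step _ (by omega) (dvd_mul_right 2 k) (ih _ (by omega))
  · rcases Nat.eq_zero_or_pos k with rfl | hk
    · simp [a1, b1]
    set n := 2 * k + 1 with hn
    have hN : a (n + 1) = b (n + 1) :=
      even_step _ (by omega) (by omega) (ih _ (by omega))
    -- in the quadratic relation at `n + 1`, the only unknown coefficient is that of index `n`,
    -- which occurs twice, paired with the coefficient of index 1
    have u := f2 (Or.inl rfl) (n + 1)
    have v := f2 (Or.inr rfl) (n + 1)
    rw [if_pos (by omega)] at u v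
    have r : ∑ p ∈ Finset.HasAntidiagonal.antidiagonal ((n + 1) / 2),
        ((-1) ^ p.1 * a p.1) * ((-1) ^ p.2 * a p.2) =
        ∑ p ∈ Finset.HasAntidiagonal.antidiagonal ((n + 1) / 2),
        ((-1) ^ p.1 * b p.1) * ((-1) ^ p.2 * b p.2) := by
      refine Finset.sum_congr rfl fun p hp => ?_
      have := Finset.HasAntidiagonal.mem_antidiagonal.1 hp
      rw [ih p.1 (by omega), ih p.2 (by omega)]
    rw [r, ← v, ← sub_eq_zero, ← Finset.sum_sub_distrib] at u
    rw [Finset.sum_eq_add (1, n) (n, 1)] at u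
    · have o : Odd n := ⟨k, hn⟩
      simp only [o.neg_one_pow, a1, b1] at u
      linear_combination -u / 4
    · intro h
      have := congrArg Prod.fst h
      simp only at this
      omega
    · rintro ⟨i, j⟩ hp ⟨h1, h2⟩
      have hp := Finset.HasAntidiagonal.mem_antidiagonal.1 hp
      simp only at hp
      have key : ∀ i, i ≤ n + 1 → i ≠ n → a i = b i := fun i hi hi' => by
        rcases Nat.lt_or_ge i n with h | h
        · exact ih i h
        · rw [show i = n + 1 by omega, hN]
      rw [key i (by omega) (fun e => h2 (by rw [e, show j = 1 by omega])),
        key j (by omega) (fun e => h1 (by rw [e, show i = 1 by omega]))]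
      ring
    · intro h; exact absurd (Finset.HasAntidiagonal.mem_antidiagonal.2 (by simp; omega)) h
    · intro h; exact absurd (Finset.HasAntidiagonal.mem_antidiagonal.2 (by simp)) h

/-- The theta series of `x² + 3y²` as a Lambert series: by `coeff_unique` it is enough that both
sides satisfy the same two functional equations and have the same first two coefficients. -/
theorem tt_eq_lamT {q : ℂ} (hq : ‖q‖ < 1) : tt q = lamT q := by
  obtain ⟨a, ha, a0, a1⟩ := genFun_tt
  obtain ⟨b, hb, b0, b1⟩ := genFun_lamT
  have f1 : ∀ {c : ℕ → ℂ} {F : ℂ → ℂ}, GenFun c F →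
      (∀ q, q ≠ 0 → ‖q‖ < 1 → F q + F (-q) = 4 * F (q ^ 4) - 2 * F (-q ^ 4)) → ∀ n,
      c n + (-1) ^ n * c n = 4 * (if 4 ∣ n then c (n / 4) else 0) -
        2 * (if 4 ∣ n then (-1) ^ (n / 4) * c (n / 4) else 0) := by
    intro c F h e n
    have := (h.add h.comp_neg).unique (((h.comp_pow (k := 4) (by norm_num)).smul 4).add
      ((h.comp_neg.comp_pow (k := 4) (by norm_num)).smul (-2)))
      (eventually_small _ fun q h0 hq => by rw [e q h0 hq]; ring)
    have := congrFun this n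
    linear_combination this
  have f2 : ∀ {c : ℕ → ℂ} {F : ℂ → ℂ}, GenFun c F →
      (∀ q, q ≠ 0 → ‖q‖ < 1 → F q * F (-q) = F (-q ^ 2) ^ 2) → ∀ n,
      ∑ p ∈ Finset.HasAntidiagonal.antidiagonal n, c p.1 * ((-1) ^ p.2 * c p.2) =
      if 2 ∣ n then ∑ p ∈ Finset.HasAntidiagonal.antidiagonal (n / 2),
        ((-1) ^ p.1 * c p.1) * ((-1) ^ p.2 * c p.2) else 0 := by
    intro c F h e n
    exact congrFun ((h.mul h.comp_neg).unique
      ((h.comp_neg.mul h.comp_neg).comp_pow (k := 2) (by norm_num))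
      (eventually_small _ fun q h0 hq => by rw [e q h0 hq, sq])) n
  have e : a = b := by
    refine coeff_unique a0 a1 b0 b1 ?_ ?_
    · rintro c (rfl | rfl)
      · exact f1 ha fun q => tt_add_neg
      · exact f1 hb fun q _ hq => lamT_add_neg hq
    · rintro c (rfl | rfl)
      · exact f2 ha fun q => tt_mul_neg
      · exact f2 hb fun q _ hq => lamT_mul_neg hq
  exact ha.ext hb (fun n => by rw [e]) hq

/-- The part of `∑ s(n) qⁿ` on odd exponents, as a product of theta functions. -/
theorem lamS_sub_neg {q : ℂ} (h0 : q ≠ 0) (hq : ‖q‖ < 1) :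
    lamS q - lamS (-q) = 2 * q * AA (q ^ 4) * PP (q ^ 2) := by
  have h := lamT_sq_sub hq
  rw [← tt_eq_lamT hq, ← tt_eq_lamT (by rwa [norm_neg]), tt_dissect_neg h0 hq, tt_dissect h0 hq,
    eisS, eisS] at h
  linear_combination -h / 4

/-! ### A modular equation of degree 3 -/

theorem GenFun.eventually_ne {a : ℕ → ℂ} {F : ℂ → ℂ} (h : GenFun a F) (h0 : F 0 ≠ 0) :
    ∀ᶠ q in 𝓝[≠] (0 : ℂ), F q ≠ 0 :=
  (h.continuousAt.eventually_ne h0).filter_mono nhdsWithin_le_nhds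

/-- `ψ(q)ψ(-q) = ψ(q²)φ(-q²)`: the squares of both sides agree, and their sum does not vanish near
the origin. -/
theorem ps_mul_ps_neg {q : ℂ} (hq : ‖q‖ < 1) : ps q * ps (-q) = ps (q ^ 2) * ph (-q ^ 2) := by
  obtain ⟨a, ha⟩ := genFun_ps
  obtain ⟨b, hb⟩ := genFun_ph
  have h1 := ha.mul ha.comp_neg
  have h2 := (ha.mul hb.comp_neg).comp_pow (k := 2) (by norm_num)
  have h3 := (h1.add h2).eventually_ne (by simp [ph_zero, ps_zero])
  have sq_eq := eventually_small
    (fun q => (ps q * ps (-q)) ^ 2 = (ps (q ^ 2) * ph (-q ^ 2)) ^ 2) fun q h0 hq => by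
      have e1 := ps_sq h0 hq
      have e2 := ps_sq (neg_ne_zero.2 h0) (by rwa [norm_neg])
      have e3 := ph_mul_ph_neg h0 hq
      rw [neg_sq] at e2
      rw [mul_pow, e1, e2, mul_pow, ← e3]; ring
  refine h1.ext h2 (congrFun (h1.unique h2 ?_)) hq
  filter_upwards [h3, sq_eq] with q h4 h5
  refine mul_right_cancel₀ h4 ?_
  linear_combination h5

/-- The modular equation of degree 3 relating `φ` and `ψ` at `q²`, `q⁴`, `q⁶`, `q¹²`. -/
theorem cubic_modular_eq {q : ℂ} (h0 : q ≠ 0) (hq : ‖q‖ < 1) :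
    ps (q ^ 4) ^ 2 * ph (q ^ 6) ^ 2 - q ^ 2 * ph (q ^ 2) ^ 2 * ps (q ^ 12) ^ 2 =
      ps (q ^ 2) * ps (q ^ 6) *
        (ph (q ^ 2) * ph (q ^ 6) - 4 * q ^ 2 * (ps (q ^ 4) * ps (q ^ 12))) := by
  have e1 := ps_mul_ps_cube h0 hq
  have e2 := ps_mul_ps_cube (neg_ne_zero.2 h0) (by rwa [norm_neg])
  have e3 := ps_mul_ps_neg hq
  have e4 := ps_mul_ps_neg (pow_lt_one_norm hq (k := 3) (by norm_num))
  have h2 := pow_lt_one_norm hq (k := 2) (by norm_num)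
  have e5 := tt_dissect (pow_ne_zero 2 h0) h2
  have e6 := tt_dissect_neg (pow_ne_zero 2 h0) h2
  have e7 : tt (-q ^ 2) = tt (q ^ 2) - 4 * q ^ 2 * PP ((q ^ 2) ^ 2) := by rw [e5, e6]; ring
  have n3 : (-q) ^ 3 = -q ^ 3 := by ring
  have n4 : (-q ^ 2) ^ 3 = -q ^ 6 := by ring
  have n5 : (q ^ 3) ^ 2 = q ^ 6 := by ring
  rw [tt, tt, PP, n4, ← pow_mul, ← pow_mul, ← pow_mul] at e7
  rw [n3, Even.neg_pow (by decide), Even.neg_pow (by decide), Even.neg_pow (by decide),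
    Even.neg_pow (by decide)] at e2
  rw [n5] at e4
  norm_num only at e7
  rw [← e7]
  calc _ = (ps q * ps (q ^ 3)) * (ps (-q) * ps (-q ^ 3)) := by rw [e1, e2]; ring
    _ = (ps q * ps (-q)) * (ps (q ^ 3) * ps (-q ^ 3)) := by ring
    _ = _ := by rw [e3, e4]; ring

/-- The algebraic identity between theta functions to which the extraction of the coefficients of
`q^{8k+1}` leads. -/
theorem theta_algebra {q s S u v U V x X y Y : ℂ} (hy : y ^ 2 = x * s) (hY : Y ^ 2 = X * S)
    (hs : s ^ 2 = u * v) (hS : S ^ 2 = U * V) (hx : x ^ 2 = u ^ 2 + 4 * q * v ^ 2)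
    (hM : y * Y = U * v + q * u * V)
    (hmod : v ^ 2 * U ^ 2 - q ^ 2 * u ^ 2 * V ^ 2 = s * S * (u * U - 4 * q ^ 2 * (v * V)))
    (S0 : S ≠ 0) (x0 : x ≠ 0) (y0 : y ≠ 0) :
    y * U * (u * U + 4 * q ^ 2 * (v * V) - x * X - 4 * q * (s * S)) +
      2 * q * Y * (u * x * S + 2 * v * s * X) = 4 * q ^ 2 * y ^ 2 * Y * V := by
  have hxX : x * X * (s * S) = (U * v + q * u * V) ^ 2 := by
    rw [← hM, mul_pow, hy, hY]; ring
  have hw : (s * S) ^ 2 = u * v * (U * V) := by rw [mul_pow, hs, hS]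
  have key : (y * U * (u * U + 4 * q ^ 2 * (v * V) - x * X - 4 * q * (s * S)) +
      2 * q * Y * (u * x * S + 2 * v * s * X) - 4 * q ^ 2 * y ^ 2 * Y * V) * (S * x * y) = 0 := by
    have e : (y * U * (u * U + 4 * q ^ 2 * (v * V) - x * X - 4 * q * (s * S)) +
        2 * q * Y * (u * x * S + 2 * v * s * X) - 4 * q ^ 2 * y ^ 2 * Y * V) * (S * x * y) =
        y ^ 2 * (U * S * x * (u * U + 4 * q ^ 2 * (v * V) - x * X - 4 * q * (s * S))) +
        2 * q * (y * Y) * (S * x * (u * x * S + 2 * v * s * X)) -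
        4 * q ^ 2 * y ^ 2 * (y * Y) * (S * x * V) := by ring
    rw [e, hy, hM]
    linear_combination (-x ^ 2 * U + 4 * q * v * (U * v + q * u * V)) * hxX +
      2 * q * (U * v + q * u * V) * u * x ^ 2 * hS - 4 * q * x ^ 2 * U * hw +
      (U * (s * S * (u * U + 4 * q ^ 2 * v * V) - (U * v + q * u * V) ^ 2 - 4 * q * u * v * U * V) +
        2 * q * (U * v + q * u * V) * u * U * V -
        4 * q ^ 2 * (s * S) * (U * v + q * u * V) * V) * hx -
      u * (u * U + 4 * q ^ 2 * v * V - 4 * q * (s * S)) * hmod +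
      4 * q * u * (u * U - 4 * q ^ 2 * v * V) * hw
  have := (mul_eq_zero.1 key).resolve_right (mul_ne_zero (mul_ne_zero S0 x0) y0)
  linear_combination this

/-- The series `∑ d(8k+1) qᵏ` attached by `extraction` to
`∑ d(n) qⁿ = q P(q²) (A(q⁴) - T(-q²))`, where `P`, `A`, `T` are `PP`, `AA`, `tt`. -/
noncomputable def G2 (q : ℂ) : ℂ :=
  ps q * (ph (q ^ 6) * (AA (q ^ 2) - AA q) + 12 * q ^ 2 * ps (q ^ 12) * PP q) +
    2 * q * ps (q ^ 3) *
      (ph (q ^ 2) * ph q * ps (q ^ 6) + 2 * ps (q ^ 4) * ps (q ^ 2) * ph (q ^ 3))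

/-- Only the punctured neighbourhood matters, so one may divide by theta functions there. -/
theorem G2_eq : ∀ᶠ q in 𝓝[≠] (0 : ℂ),
    G2 q = 16 * q ^ 2 * (ps q ^ 2 * ps (q ^ 3) * ps (q ^ 12)) := by
  obtain ⟨a, ha⟩ := genFun_ps
  obtain ⟨b, hb⟩ := genFun_ph
  have n1 := (ha.comp_pow (k := 6) (by norm_num)).eventually_ne (by simp [ps_zero])
  have n2 := hb.eventually_ne (by simp [ph_zero])
  have n3 := ha.eventually_ne (by simp [ps_zero])
  have hmod := eventually_small _ fun q h0 hq => cubic_modular_eq (q := q) h0 hq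
  have h1 := eventually_small _ fun q h0 hq => And.intro h0 hq
  filter_upwards [n1, n2, n3, hmod, h1] with q S0 x0 y0 hmod h
  obtain ⟨h0, hq⟩ := h
  have hp : ∀ k, k ≠ 0 → q ^ k ≠ 0 ∧ ‖q ^ k‖ < 1 := fun k hk =>
    ⟨pow_ne_zero k h0, pow_lt_one_norm hq hk⟩
  have hy := ps_sq h0 hq
  have hY := ps_sq (hp 3 (by norm_num)).1 (hp 3 (by norm_num)).2
  have hs := ps_sq (hp 2 (by norm_num)).1 (hp 2 (by norm_num)).2
  have hS := ps_sq (hp 6 (by norm_num)).1 (hp 6 (by norm_num)).2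
  have hx := ph_sq h0 hq
  have hM := ps_mul_ps_cube h0 hq
  simp only [← pow_mul] at hY hs hS
  norm_num only at hY hs hS
  have := theta_algebra hy hY hs hS hx hM (by linear_combination hmod) S0 x0 y0
  have e : (q ^ 2) ^ 3 = q ^ 6 ∧ (q ^ 2) ^ 2 = q ^ 4 ∧ (q ^ 4) ^ 3 = q ^ 12 :=
    ⟨by ring, by ring, by ring⟩
  rw [G2, AA, AA, tt, tt, PP, PP, PP, e.1, e.2.1, e.2.2]
  linear_combination this

/-! ### Extraction of coefficients and sums of triangular numbers -/

theorem exists_root {Q : ℂ} (h0 : Q ≠ 0) (hQ : ‖Q‖ < 1) : ∃ q, q ^ 2 = Q ∧ q ≠ 0 ∧ ‖q‖ < 1 := by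
  obtain ⟨r, rfl⟩ : ∃ r : ℂ, Q = r ^ 2 := ⟨_, (Complex.cpow_nat_inv_pow Q two_ne_zero).symm⟩
  refine ⟨r, rfl, ne_zero_pow two_ne_zero h0, ?_⟩
  rw [norm_pow] at hQ
  exact lt_of_pow_lt_pow_left₀ 2 zero_le_one (by simpa using hQ)

/-- Extraction of every eighth coefficient, in three bisections. -/
theorem extraction {d : ℕ → ℂ} {F : ℂ → ℂ} (hd : GenFun d F)
    (hF : ∀ q, q ≠ 0 → ‖q‖ < 1 → F q = q * PP (q ^ 2) * (AA (q ^ 4) - tt (-q ^ 2))) :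
    ∃ E, GenFun (fun n => d (8 * n + 1)) E ∧ ∀ q, q ≠ 0 → ‖q‖ < 1 → E q = G2 q := by
  obtain ⟨E0, g0, h0⟩ := hd.odd
  obtain ⟨E1, g1, h1⟩ := g0.even
  obtain ⟨E2, g2, h2⟩ := g1.even
  have k0 : ∀ q, q ≠ 0 → ‖q‖ < 1 → E0 q = PP q * (AA (q ^ 2) - tt (-q)) := by
    intro Q hQ0 hQ
    obtain ⟨q, rfl, q0, hq⟩ := exists_root hQ0 hQ
    have h := h0 q hq
    rw [hF q q0 hq, hF (-q) (neg_ne_zero.2 q0) (by rwa [norm_neg]), neg_sq,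
      Even.neg_pow (by decide : Even 4)] at h
    rw [← pow_mul]
    refine mul_left_cancel₀ (mul_ne_zero two_ne_zero q0) ?_
    linear_combination -h
  have k1 : ∀ q, q ≠ 0 → ‖q‖ < 1 → E1 q = ps (q ^ 2) * ph (q ^ 3) * (AA q - AA (q ^ 2)) +
      2 * q * ph q * ps (q ^ 6) * PP q := by
    intro Q hQ0 hQ
    obtain ⟨q, rfl, q0, hq⟩ := exists_root hQ0 hQ
    have h := h1 q hq
    have n0 := neg_ne_zero.2 q0
    have hn : ‖-q‖ < 1 := by rwa [norm_neg]
    rw [k0 q q0 hq, k0 (-q) n0 hn, PP_dissect q0 hq, PP_dissect n0 hn, neg_neg,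
      tt_dissect_neg q0 hq, tt_dissect q0 hq] at h
    simp only [Even.neg_pow (by decide : Even 2), Even.neg_pow (by decide : Even 4),
      Even.neg_pow (by decide : Even 6), Even.neg_pow (by decide : Even 12)] at h
    simp only [← pow_mul]
    norm_num only
    linear_combination -h / 2
  refine ⟨E2, ?_, ?_⟩
  · convert g2 using 3 with n
    ring
  · intro Q hQ0 hQ
    obtain ⟨q, rfl, q0, hq⟩ := exists_root hQ0 hQ
    have h := h2 q hq
    have n0 := neg_ne_zero.2 q0
    have hn : ‖-q‖ < 1 := by rwa [norm_neg]
    have h3 := pow_lt_one_norm hq (k := 3) (by norm_num)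
    have e3 : (-q) ^ 3 = - q ^ 3 := by ring
    have a1 := ph_dissect (neg_ne_zero.2 (pow_ne_zero 3 q0)) (by rwa [norm_neg])
    rw [k1 q q0 hq, k1 (-q) n0 hn, AA_dissect q0 hq, AA_dissect n0 hn, ph_dissect q0 hq,
      ph_dissect n0 hn, PP_dissect q0 hq, PP_dissect n0 hn, e3, a1,
      ph_dissect (pow_ne_zero 3 q0) h3] at h
    simp only [Even.neg_pow (by decide : Even 2), Even.neg_pow (by decide : Even 4),
      Even.neg_pow (by decide : Even 6), Even.neg_pow (by decide : Even 8),
      Even.neg_pow (by decide : Even 12), ← pow_mul] at h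
    rw [G2]
    simp only [← pow_mul]
    norm_num only at h ⊢
    linear_combination -h / 2

/-- The generating function of `a(n)` in terms of theta functions. Since the hypothesis is an
equation between a possibly divergent `tsum` and a product, convergence has to be proved as well. -/
theorem genFun_a (a : ℕ → ℤ)
    (ha : ∀ q : ℂ, ‖q‖ < 1 →
      ∑' k : ℕ, (a k : ℂ) * q ^ k =
        q * ∏' k : ℕ, ((1 - q ^ (2 * (k + 1))) * (1 - q ^ (4 * (k + 1))) *
          (1 - q ^ (6 * (k + 1))) * (1 - q ^ (12 * (k + 1))))) :
    GenFun (fun n => (a n : ℂ)) (fun q => ∑' k : ℕ, (a k : ℂ) * q ^ k) ∧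
    ∀ q, q ≠ 0 → ‖q‖ < 1 → ∑' k : ℕ, (a k : ℂ) * q ^ k = q * PP (q ^ 2) * tt (-q ^ 2) := by
  constructor
  · intro q hq
    refine Summable.hasSum ?_
    rcases eq_or_ne q 0 with rfl | h0
    · refine summable_of_ne_finset_zero (s := {0}) fun n hn => ?_
      rw [zero_pow (by simpa using hn), mul_zero]
    · by_contra hs
      -- a divergent series has the junk value `0`, but the product does not vanish
      have h := ha q hq
      rw [tsum_eq_zero_of_not_summable hs] at h
      exact mul_ne_zero h0 (eta_prod h0 hq).2 h.symm
  · intro q h0 hq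
    have e1 : (-q ^ 2) ^ 3 = -q ^ 6 := by ring
    rw [ha q hq, (eta_prod h0 hq).1, PP, tt, e1, ← pow_mul]
    norm_num only
    ring

theorem tri_nonneg (x : ℤ) : 0 ≤ x * (x - 1) / 2 := by
  refine Int.ediv_nonneg ?_ (by norm_num)
  rcases le_or_gt x 0 with h | h <;> nlinarith

/-- `∑_{x ∈ ℤ} q^{x(x-1)/2} = 2 ψ(q)`. -/
theorem tsum_triangular {q : ℂ} (h0 : q ≠ 0) (hq : ‖q‖ < 1) :
    ∑' x : ℤ, q ^ (x * (x - 1) / 2).toNat = 2 * ps q := by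
  obtain ⟨r, rfl, r0, hr⟩ := exists_root h0 hq
  have h := (tsum_pronic_all hr).2
  have e : ∀ x : ℤ, r ^ (x * (x + 1)) = (r ^ 2) ^ ((x + 1) * ((x + 1) - 1) / 2).toNat := by
    intro x
    have h1 := tri_nonneg (x + 1)
    have h2 : 2 * ((x + 1) * ((x + 1) - 1) / 2) = x * (x + 1) := by
      rw [Int.mul_ediv_cancel']
      · ring
      · have := Int.even_mul_succ_self x
        rw [show (x + 1) * ((x + 1) - 1) = x * (x + 1) by ring]
        exact even_iff_two_dvd.1 this
    rw [← pow_mul, ← zpow_natCast]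
    push_cast
    rw [Int.toNat_of_nonneg h1, h2]
  simp only [e] at h
  exact (tsum_shift (fun x : ℤ => (r ^ 2) ^ (x * (x - 1) / 2).toNat) 1).symm.trans h

theorem summable_triangular {q : ℂ} (hq : ‖q‖ < 1) :
    Summable (fun x : ℤ => q ^ (x * (x - 1) / 2).toNat) := by
  have e : ∀ x : ℤ, q ^ (x * (x - 1) / 2).toNat = q ^ (x * (x - 1) / 2) := fun x => by
    rw [← zpow_natCast, Int.toNat_of_nonneg (tri_nonneg x)]
  simp only [e]
  refine summable_zpow_of_le_add_one hq _ (fun x => ?_) fun x => tri_nonneg x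
  have h := Int.ediv_mul_cancel (even_iff_two_dvd.1 (Int.even_mul_pred_self x))
  have h' : 0 ≤ (x - 1) * (x - 2) := by rcases le_or_gt x 1 with h | h <;> nlinarith
  rcases abs_cases x with ⟨h1, h2⟩ | ⟨h1, h2⟩ <;> rw [h1] <;> nlinarith

/-- The generating function of `t(1,1,3,12;n)` is `16 ψ(q)²ψ(q³)ψ(q¹²)`. -/
theorem genFun_tquad : ∃ F : ℂ → ℂ, GenFun (fun n => (tquad 1 1 3 12 n : ℂ)) F ∧
    ∀ q, q ≠ 0 → ‖q‖ < 1 → F q = 16 * (ps q ^ 2 * ps (q ^ 3) * ps (q ^ 12)) := by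
  let τ : ℤ → ℕ := fun x => (x * (x - 1) / 2).toNat
  have hτ : ∀ x, (τ x : ℤ) = x * (x - 1) / 2 := fun x => Int.toNat_of_nonneg (tri_nonneg x)
  let e : ℤ × ℤ × ℤ × ℤ → ℕ := fun p => τ p.1 + (τ p.2.1 + (3 * τ p.2.2.1 + 12 * τ p.2.2.2))
  have hs : ∀ q : ℂ, ‖q‖ < 1 → Summable (fun p => q ^ e p) ∧ ∑' p, q ^ e p =
      (∑' x, q ^ τ x) * ((∑' x, q ^ τ x) * ((∑' x, (q ^ 3) ^ τ x) * ∑' x, (q ^ 12) ^ τ x)) := by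
    intro q hq
    have s1 := (summable_triangular hq).norm
    have s3 := (summable_triangular (pow_lt_one_norm hq (k := 3) (by norm_num))).norm
    have s12 := (summable_triangular (pow_lt_one_norm hq (k := 12) (by norm_num))).norm
    have t1 := summable_mul_of_summable_norm s3 s12
    have t2 := summable_mul_of_summable_norm s1 t1.norm
    have t3 := summable_mul_of_summable_norm s1 t2.norm
    have he : (fun p => q ^ e p) = fun p : ℤ × ℤ × ℤ × ℤ =>
        q ^ τ p.1 * (q ^ τ p.2.1 * ((q ^ 3) ^ τ p.2.2.1 * (q ^ 12) ^ τ p.2.2.2)) := by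
      funext p
      simp only [e, pow_add, pow_mul]
    rw [he]
    refine ⟨t3, ?_⟩
    rw [tsum_mul_tsum_of_summable_norm s3 s12, tsum_mul_tsum_of_summable_norm s1 t1.norm,
      tsum_mul_tsum_of_summable_norm s1 t2.norm]
  refine ⟨fun q => ∑' p, q ^ e p, ?_, fun q h0 hq => ?_⟩
  · have h := GenFun.count (e := e) (fun q hq => (hs q hq).1) (fun q _ => rfl)
    have he : (fun n => (tquad 1 1 3 12 n : ℂ)) = fun n => (Nat.card {i // e i = n} : ℂ) := by
      funext n
      unfold tquad
      congr 1
      refine Nat.card_congr (Equiv.subtypeEquivRight fun p => ?_)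
      have h1 := hτ p.1
      have h2 := hτ p.2.1
      have h3 := hτ p.2.2.1
      have h4 := hτ p.2.2.2
      rw [← h1, ← h2, ← h3, ← h4]
      simp only [e]
      push_cast
      omega
    rw [he]; exact h
  · simp only
    rw [(hs q hq).2]
    have h3 := pow_lt_one_norm hq (k := 3) (by norm_num)
    have h12 := pow_lt_one_norm hq (k := 12) (by norm_num)
    have t1 := tsum_triangular h0 hq
    have t3 := tsum_triangular (pow_ne_zero 3 h0) h3
    have t12 := tsum_triangular (pow_ne_zero 12 h0) h12
    rw [t1, t3, t12]; ring

/-- The divisors of `3^β n₁` prime to 3 are the divisors of `n₁`. -/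
theorem ss_eq_of_factor {m β n₁ : ℕ} (hn₁ : 0 < n₁) (h3 : ¬ 3 ∣ n₁) (h : m = 3 ^ β * n₁) :
    ss m = ∑ d ∈ n₁.divisors, (d : ℤ) := by
  unfold ss
  refine Finset.sum_congr ?_ fun _ _ => rfl
  ext d
  simp only [Finset.mem_filter, Nat.mem_divisors]
  constructor
  · rintro ⟨⟨h1, h2⟩, h4⟩
    rw [h] at h1
    exact ⟨(((Nat.prime_three.coprime_iff_not_dvd.2 h4).symm).pow_right β).dvd_of_dvd_mul_left h1,
      hn₁.ne'⟩
  · rintro ⟨h1, h2⟩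
    refine ⟨⟨h ▸ h1.mul_left _, ?_⟩, fun h4 => h3 (h4.trans h1)⟩
    rw [h]; positivity

theorem stmt_18 (n : ℕ) (hn : 0 < n) (β n₁ : ℕ) (hn₁ : 0 < n₁) (h3 : ¬ 3 ∣ n₁)
    (hfac : 8 * n + 17 = 3 ^ β * n₁) (a : ℕ → ℤ)
    (ha : ∀ q : ℂ, ‖q‖ < 1 →
      ∑' k : ℕ, (a k : ℂ) * q ^ k =
        q * ∏' k : ℕ, ((1 - q ^ (2 * (k + 1))) * (1 - q ^ (4 * (k + 1))) *
          (1 - q ^ (6 * (k + 1))) * (1 - q ^ (12 * (k + 1))))) :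
    (tquad 1 1 3 12 n : ℤ) = ∑ d ∈ n₁.divisors, (d : ℤ) - a (8 * n + 17) := by
  obtain ⟨ga, ea⟩ := genFun_a a ha
  -- the odd part of `∑ s(m) qᵐ` minus `∑ a(m) qᵐ`; its coefficient at odd `m` is `s(m) - a(m)`
  have gd := (((genFun_lamS.add (genFun_lamS.comp_neg.smul (-1))).smul (1 / 2)).add (ga.smul (-1)))
  obtain ⟨E, gE, hE⟩ := extraction gd fun q h0 hq => by
    have h := lamS_sub_neg h0 hq
    rw [ea q h0 hq]
    linear_combination h / 2
  obtain ⟨F, gF, hF⟩ := genFun_tquad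
  have key := gE.unique ((gF.shift 2).smul 1) (by
    filter_upwards [G2_eq, eventually_small _ fun q h0 hq => And.intro h0 hq] with q h h'
    rw [hE q h'.1 h'.2, h, hF q h'.1 h'.2]; ring)
  -- `8n + 17 = 8(n + 2) + 1`
  have key := congrFun key (n + 2)
  rw [if_pos (by omega), Nat.add_sub_cancel, show 8 * (n + 2) + 1 = 8 * n + 17 by ring,
    Odd.neg_one_pow ⟨4 * n + 8, by ring⟩] at key
  rw [← ss_eq_of_factor hn₁ h3 hfac]
  have : (tquad 1 1 3 12 n : ℂ) = (ss (8 * n + 17) : ℂ) - (a (8 * n + 17) : ℂ) := by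
    linear_combination -key
  exact_mod_cast this
end
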